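/- arXiv:1903.06066 — 9 statements merged into one kernel-verified Lean document; each statement's English description precedes it below -/
import Mathlib

section
/- Assume the Setting. Then for every n ∈ {1,...,N} it holds P-almost surely that P(∩_{k=0}^{n} A_k | σ(Y_0)) = E[ p_n(Y_{n−1}) · 1_{{𝒱(Y_{n−1}) ≥ c^{(Σ_{l=0}^{n−2} α^l)} · 𝒱(Y_0)^{(α^{n−1})}}} · 1_{∩_{k=0}^{n−1} A_k} | σ(Y_0) ] (with the empty sum Σ_{l=0}^{−1} α^l = 0). -/
open MeasureTheory ProbabilityTheory
open scoped ENNReal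

lemma indep_sup_left_aux {Ω : Type*} {m1 m2 m3 mΩ : MeasurableSpace Ω} (P : Measure Ω)
    [IsProbabilityMeasure P] (h1 : m1 ≤ mΩ) (h2 : m2 ≤ mΩ) (h3 : m3 ≤ mΩ)
    (h123 : Indep m1 (m2 ⊔ m3) P) (h23 : Indep m2 m3 P) : Indep (m1 ⊔ m2) m3 P := by
  refine IndepSets.indep (p1 := {s | ∃ C D, MeasurableSet[m1] C ∧ MeasurableSet[m2] D ∧ s = C ∩ D})
    (p2 := {s | MeasurableSet[m3] s}) (sup_le h1 h2) h3 ?_ (@MeasurableSpace.isPiSystem_measurableSet Ω m3) ?_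
    (@MeasurableSpace.generateFrom_measurableSet Ω m3).symm ?_
  · rintro _ ⟨C, D, hC, hD, rfl⟩ _ ⟨C', D', hC', hD', rfl⟩ -
    exact ⟨C ∩ C', D ∩ D', hC.inter hC', hD.inter hD', by
      ext x; simp only [Set.mem_inter_iff]; tauto⟩
  · apply le_antisymm
    · refine sup_le ?_ ?_
      · intro s hs
        exact MeasurableSpace.measurableSet_generateFrom
          ⟨s, Set.univ, hs, @MeasurableSet.univ _ m2, by simp⟩
      · intro s hs
        exact MeasurableSpace.measurableSet_generateFrom
          ⟨Set.univ, s, @MeasurableSet.univ _ m1, hs, by simp⟩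
    · refine MeasurableSpace.generateFrom_le ?_
      rintro _ ⟨C, D, hC, hD, rfl⟩
      have hl : m1 ≤ m1 ⊔ m2 := le_sup_left
      have hr : m2 ≤ m1 ⊔ m2 := le_sup_right
      exact @MeasurableSet.inter _ (m1 ⊔ m2) _ _ (hl _ hC) (hr _ hD)
  · rw [IndepSets_iff]
    rintro _ E ⟨C, D, hC, hD, rfl⟩ hE
    rw [Indep_iff] at h123 h23
    have hl : m2 ≤ m2 ⊔ m3 := le_sup_left
    have hr : m3 ≤ m2 ⊔ m3 := le_sup_right
    rw [Set.inter_assoc, h123 C (D ∩ E) hC (@MeasurableSet.inter _ (m2 ⊔ m3) _ _ (hl _ hD)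
      (hr _ hE)), h23 D E hD hE, h123 C D hC (hl _ hD), mul_assoc]

lemma freezing_aux {Ω H U : Type*} {mH : MeasurableSpace H} {mU : MeasurableSpace U}
    {F mΩ : MeasurableSpace Ω} (P : Measure Ω)
    [IsProbabilityMeasure P] (hF : F ≤ mΩ) (X : Ω → H) (Z : Ω → U) (hX : Measurable[F] X)
    (hZ : Measurable Z) (hind : Indep F (MeasurableSpace.comap Z mU) P)
    (B : Set Ω) (hB : MeasurableSet[F] B) (Q : Set (H × U)) (hQ : MeasurableSet Q) :
    P (B ∩ {ω | (X ω, Z ω) ∈ Q}) = ∫⁻ ω in B, P {ω' | (X ω, Z ω') ∈ Q} ∂P := by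
  classical
  set T : Ω → Prop × H := fun ω => (ω ∈ B, X ω) with hT
  have hTm : Measurable[F] T :=
    Measurable.prodMk (@measurableSet_setOfPred _ F (fun ω => ω ∈ B) |>.1 hB) hX
  have hTm' : Measurable T := hTm.mono hF le_rfl
  have hi : IndepFun T Z P := by
    rw [IndepFun_iff_Indep]
    exact indep_of_indep_of_le_left hind hTm.comap_le
  have hmap := hi.map_prod_eq_prod_map_map hTm'.aemeasurable hZ.aemeasurable
  set D : Set ((Prop × H) × U) := {x | x.1.1 ∧ (x.1.2, x.2) ∈ Q} with hD
  have hDm : MeasurableSet D := by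
    apply MeasurableSet.inter
    · exact measurableSet_setOfPred.2 (measurable_fst.comp measurable_fst)
    · exact ((measurable_snd.comp measurable_fst).prodMk measurable_snd) hQ
  have h1 : P (B ∩ {ω | (X ω, Z ω) ∈ Q}) = P.map (fun ω => (T ω, Z ω)) D := by
    rw [Measure.map_apply (hTm'.prodMk hZ) hDm]; rfl
  rw [h1, hmap, Measure.prod_apply hDm,
    lintegral_map (measurable_measure_prodMk_left hDm) hTm', ← lintegral_indicator (hF _ hB)]
  refine lintegral_congr fun ω => ?_
  rw [Measure.map_apply hZ (measurable_prodMk_left hDm)]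
  by_cases h : ω ∈ B
  · rw [Set.indicator_of_mem h]
    congr 1
    ext ω'
    simp [hD, hT, h]
  · rw [Set.indicator_of_notMem h]
    have : Z ⁻¹' (Prod.mk (T ω) ⁻¹' D) = ∅ := by
      ext ω'
      simp [hD, hT, h]
    rw [this, measure_empty]

/-- In the abstract Markov-chain setting, for every `n ∈ {1,...,N}` the conditional probability
of `∩_{k=0}^{n} A_k` given `σ(Y_0)` equals the conditional expectation of
`p_n(Y_{n−1}) · 1_{{𝒱(Y_{n−1}) ≥ c^{Σ_{l<n−1} α^l}·𝒱(Y_0)^{α^{n−1}}}} · 1_{∩_{k=0}^{n−1} A_k}`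
given `σ(Y_0)`, `P`-almost surely. -/
theorem conditional_probability_recursion
    {H U Ω : Type*} [mH : MeasurableSpace H] [mU : MeasurableSpace U] [mΩ : MeasurableSpace Ω]
    (P : Measure Ω) [IsProbabilityMeasure P]
    (Φ : H → U → H) (hΦ : Measurable (Function.uncurry Φ))
    (N : ℕ) (hN : 1 ≤ N)
    (c α θ : ℝ) (hc0 : 0 < c) (hc1 : c ≤ 1) (hα : 1 < α) (hθ : 1 < θ)
    (Hs : ℕ → Set H) (hHs : ∀ n ≤ N, MeasurableSet (Hs n))
    (Z : ℕ → Ω → U) (hZmeas : ∀ n, 1 ≤ n → n ≤ N → Measurable (Z n))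
    (hZindep : iIndepFun (fun n : (Finset.Icc 1 N) => Z (n : ℕ)) P)
    (hZid : ∀ n, 1 ≤ n → n ≤ N → P.map (Z n) = P.map (Z 1))
    (Y : ℕ → Ω → H) (hY0meas : Measurable (Y 0))
    (hYrec : ∀ n, 1 ≤ n → n ≤ N → ∀ ω, Y n ω = Φ (Y (n - 1) ω) (Z n ω))
    (hYZindep : Indep (MeasurableSpace.comap (Y 0) mH)
        (⨆ n ∈ Finset.Icc 1 N, MeasurableSpace.comap (Z n) mU) P)
    (V : H → ℝ) (hV : Measurable V) (hVpos : ∀ x, 0 ≤ V x)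
    (A : ℕ → Set Ω)
    (hA0 : A 0 = {ω | Y 0 ω ∈ Hs 0})
    (hA : ∀ n, 1 ≤ n → n ≤ N →
        A n = {ω | c * V (Y (n - 1) ω) ^ α ≤ V (Y n ω) ∧ Y n ω ∈ Hs n})
    (p : ℕ → H → ℝ≥0∞)
    (hp : ∀ n, 1 ≤ n → n ≤ N → ∀ v : H,
        p n v = P {ω | c * V v ^ α ≤ V (Φ v (Z n ω)) ∧ Φ v (Z n ω) ∈ Hs n}) :
    ∀ n, 1 ≤ n → n ≤ N →
      P[Set.indicator (⋂ k ∈ Finset.Iic n, A k) (fun _ => (1 : ℝ)) |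
          MeasurableSpace.comap (Y 0) mH]
        =ᵐ[P]
      P[(fun ω => (p n (Y (n - 1) ω)).toReal *
          Set.indicator {ω' | c ^ (∑ l ∈ Finset.range (n - 1), α ^ l) *
              V (Y 0 ω') ^ (α ^ (n - 1)) ≤ V (Y (n - 1) ω')} (fun _ => (1 : ℝ)) ω *
          Set.indicator (⋂ k ∈ Finset.Iic (n - 1), A k) (fun _ => (1 : ℝ)) ω) |
          MeasurableSpace.comap (Y 0) mH] := by
  intro n hn1 hnN
  obtain ⟨m, rfl⟩ : ∃ m, n = m + 1 := ⟨n - 1, by omega⟩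
  simp only [Nat.add_sub_cancel]
  have hYs : ∀ k, k + 1 ≤ N → ∀ ω, Y (k + 1) ω = Φ (Y k ω) (Z (k + 1) ω) := fun k hk ω => by
    simpa using hYrec (k + 1) (by omega) hk ω
  have hAs : ∀ k, k + 1 ≤ N →
      A (k + 1) = {ω | c * V (Y k ω) ^ α ≤ V (Y (k + 1) ω) ∧ Y (k + 1) ω ∈ Hs (k + 1)} :=
    fun k hk => by simpa using hA (k + 1) (by omega) hk
  -- the lower bound is automatic
  have hlow : ∀ k, k ≤ N → ∀ ω ∈ (⋂ j ∈ Finset.Iic k, A j),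
      c ^ (∑ l ∈ Finset.range k, α ^ l) * V (Y 0 ω) ^ (α ^ k) ≤ V (Y k ω) := by
    intro k
    induction k with
    | zero => intro _ ω _; simp
    | succ k ih =>
      intro hk ω hω
      simp only [Set.mem_iInter, Finset.mem_Iic] at hω
      have h1 := ih (by omega) ω (by
        simp only [Set.mem_iInter, Finset.mem_Iic]
        exact fun i hi => hω i (by omega))
      have h2 := hω (k + 1) le_rfl
      rw [hAs k hk] at h2
      refine le_trans ?_ h2.1
      have hV0 := hVpos (Y 0 ω)
      have hcp : 0 ≤ c ^ (∑ l ∈ Finset.range k, α ^ l) := Real.rpow_nonneg hc0.le _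
      have h3 := Real.rpow_le_rpow (mul_nonneg hcp (Real.rpow_nonneg hV0 _)) h1
        (by linarith : (0 : ℝ) ≤ α)
      rw [Real.mul_rpow hcp (Real.rpow_nonneg hV0 _), ← Real.rpow_mul hc0.le,
        ← Real.rpow_mul hV0] at h3
      calc _ = c * (c ^ ((∑ l ∈ Finset.range k, α ^ l) * α) * V (Y 0 ω) ^ (α ^ k * α)) := by
            rw [geom_sum_succ, Real.rpow_add hc0, Real.rpow_one, pow_succ,
              mul_comm α (∑ l ∈ Finset.range k, α ^ l)]
            ring
        _ ≤ _ := mul_le_mul_of_nonneg_left h3 hc0.le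
  -- the filtration
  let F : ℕ → MeasurableSpace Ω := fun k =>
    MeasurableSpace.comap (Y 0) mH ⊔ ⨆ i ∈ Finset.Icc 1 k, MeasurableSpace.comap (Z i) mU
  have hFmono : ∀ j k, j ≤ k → F j ≤ F k := fun j k hjk =>
    sup_le_sup_left (biSup_mono fun i hi => by
      simp only [Finset.mem_Icc] at hi ⊢; omega) _
  have hZF : ∀ k, 1 ≤ k → Measurable[F k] (Z k) := fun k hk => by
    rw [measurable_iff_comap_le]
    refine le_trans ?_ le_sup_right
    exact le_iSup₂_of_le k (by simp [hk]) le_rfl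
  have hYF : ∀ k, k ≤ N → Measurable[F k] (Y k) := by
    intro k
    induction k with
    | zero =>
      intro _
      rw [measurable_iff_comap_le]
      exact le_sup_left
    | succ k ih =>
      intro hk
      have h1 : Measurable[F (k + 1)] (Y k) :=
        (ih (by omega)).mono (hFmono _ _ (by omega)) le_rfl
      have h2 := hZF (k + 1) (by omega)
      have : Y (k + 1) = fun ω => Function.uncurry Φ (Y k ω, Z (k + 1) ω) :=
        funext fun ω => hYs k hk ω
      rw [this]
      exact hΦ.comp (Measurable.prodMk h1 h2)
  have hFle : ∀ k, k ≤ N → F k ≤ mΩ := fun k hk =>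
    sup_le hY0meas.comap_le (iSup₂_le fun i hi => by
      simp only [Finset.mem_Icc] at hi
      exact (hZmeas i hi.1 (by omega)).comap_le)
  have hAF : ∀ k, k ≤ N → MeasurableSet[F k] (A k) := by
    intro k hk
    rcases k with _ | k
    · rw [hA0]
      exact hYF 0 hk (hHs 0 hk)
    · rw [hAs k hk]
      have h1 : Measurable[F (k + 1)] (Y k) :=
        (hYF k (by omega)).mono (hFmono _ _ (by omega)) le_rfl
      have h2 := hYF (k + 1) hk
      have e1 : Measurable (fun x : H => c * V x ^ α) := by fun_prop
      exact @MeasurableSet.inter _ (F (k + 1)) _ _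
        (measurableSet_le (e1.comp h1) (hV.comp h2))
        (h2 (hHs _ hk))
  have hBF : ∀ k, k ≤ N → MeasurableSet[F k] (⋂ j ∈ Finset.Iic k, A j) := fun k hk =>
    @Finset.measurableSet_biInter _ _ (F k) _ _ fun j hj => by
      simp only [Finset.mem_Iic] at hj
      exact hFmono j k hj _ (hAF j (by omega))
  -- independence of `Z (m+1)` from the past
  have hind : Indep (F m) (MeasurableSpace.comap (Z (m + 1)) mU) P := by
    have hZle : ∀ i : (Finset.Icc 1 N), MeasurableSpace.comap (Z (i : ℕ)) mU ≤ mΩ := fun i => by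
      have := i.2
      simp only [Finset.mem_Icc] at this
      exact (hZmeas i this.1 this.2).comap_le
    apply indep_sup_left_aux P hY0meas.comap_le
    · exact iSup₂_le fun i hi => by
        simp only [Finset.mem_Icc] at hi
        exact (hZmeas i hi.1 (by omega)).comap_le
    · exact (hZmeas _ (by omega) hnN).comap_le
    · refine indep_of_indep_of_le_right hYZindep (sup_le ?_ ?_)
      · exact biSup_mono fun i hi => by
          simp only [Finset.mem_Icc] at hi ⊢; omega
      · exact le_iSup₂_of_le (m + 1) (by simp [hnN]) le_rfl
    · have := indep_iSup_of_disjoint hZle ((iIndepFun_iff_iIndep _ _ _).1 hZindep)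
        (S := {i | (i : ℕ) ≤ m}) (T := {i | (i : ℕ) = m + 1}) (by
          rw [Set.disjoint_left]
          intro i hi hi'
          simp only [Set.mem_ofPred_eq] at hi hi'
          omega)
      refine indep_of_indep_of_le_right (indep_of_indep_of_le_left this ?_) ?_
      · refine iSup₂_le fun i hi => ?_
        simp only [Finset.mem_Icc] at hi
        exact le_iSup₂_of_le (f := fun (i : (Finset.Icc 1 N)) (_ : i ∈ {i : (Finset.Icc 1 N) |
          (i : ℕ) ≤ m}) => MeasurableSpace.comap (Z (i : ℕ)) mU)
          ⟨i, by simp only [Finset.mem_Icc]; omega⟩ hi.2 le_rfl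
      · exact le_iSup₂_of_le (f := fun (i : (Finset.Icc 1 N)) (_ : i ∈ {i : (Finset.Icc 1 N) |
          (i : ℕ) = m + 1}) => MeasurableSpace.comap (Z (i : ℕ)) mU)
          ⟨m + 1, by simp only [Finset.mem_Icc]; omega⟩ rfl le_rfl
  have hmN : m ≤ N := by omega
  have hZm := hZmeas (m + 1) hn1 hnN
  set Q : Set (H × U) := {x | c * V x.1 ^ α ≤ V (Φ x.1 x.2) ∧ Φ x.1 x.2 ∈ Hs (m + 1)} with hQ
  have hQm : MeasurableSet Q := by
    have e1 : Measurable (fun x : H × U => c * V x.1 ^ α) := by fun_prop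
    have e2 : Measurable (fun x : H × U => Φ x.1 x.2) := hΦ
    exact (measurableSet_le e1 (hV.comp e2)).inter (e2 (hHs _ hnN))
  have hpQ : ∀ v, p (m + 1) v = P {ω' | (v, Z (m + 1) ω') ∈ Q} := fun v =>
    hp (m + 1) hn1 hnN v
  have hpm : Measurable (p (m + 1)) := by
    have := measurable_measure_prodMk_left (ν := P.map (Z (m + 1))) hQm
    convert this using 1
    ext v
    rw [hpQ, Measure.map_apply hZm (measurable_prodMk_left hQm)]
    rfl
  set B : Set Ω := ⋂ k ∈ Finset.Iic m, A k with hBdef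
  have hBs : (⋂ k ∈ Finset.Iic (m + 1), A k) = B ∩ {ω | (Y m ω, Z (m + 1) ω) ∈ Q} := by
    have : A (m + 1) = {ω | (Y m ω, Z (m + 1) ω) ∈ Q} := by
      rw [hAs m hnN]
      ext ω
      simp only [hQ, Set.mem_ofPred_eq, hYs m hnN ω]
    rw [← this]
    ext ω
    simp only [hBdef, Set.mem_iInter, Finset.mem_Iic, Set.mem_inter_iff]
    constructor
    · exact fun h => ⟨fun i hi => h i (by omega), h _ le_rfl⟩
    · rintro ⟨h1, h2⟩ i hi
      rcases Nat.lt_or_ge m i with h | h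
      · obtain rfl : i = m + 1 := by omega
        exact h2
      · exact h1 i h
  have hBm : MeasurableSet B := hFle m hmN _ (hBF m hmN)
  have hYm : Measurable (Y m) := (hYF m hmN).mono (hFle m hmN) le_rfl
  have hB1m : MeasurableSet (⋂ k ∈ Finset.Iic (m + 1), A k) := hFle _ hnN _ (hBF _ hnN)
  have hg : (fun ω => (p (m + 1) (Y m ω)).toReal *
          Set.indicator {ω' | c ^ (∑ l ∈ Finset.range m, α ^ l) *
              V (Y 0 ω') ^ (α ^ m) ≤ V (Y m ω')} (fun _ => (1 : ℝ)) ω *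
          Set.indicator B (fun _ => (1 : ℝ)) ω)
      = Set.indicator B (fun ω => (p (m + 1) (Y m ω)).toReal) := by
    ext ω
    by_cases h : ω ∈ B
    · have h' : ω ∈ {ω' | c ^ (∑ l ∈ Finset.range m, α ^ l) *
              V (Y 0 ω') ^ (α ^ m) ≤ V (Y m ω')} := hlow m hmN ω h
      rw [Set.indicator_of_mem h, Set.indicator_of_mem h, Set.indicator_of_mem h']
      ring
    · rw [Set.indicator_of_notMem h, Set.indicator_of_notMem h, mul_zero]
  rw [hg]
  have hple : ∀ v, p (m + 1) v ≤ 1 := fun v => by rw [hpQ]; exact prob_le_one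
  have hpint : Integrable (fun ω => (p (m + 1) (Y m ω)).toReal) P := by
    refine Integrable.of_bound (hpm.comp hYm).ennreal_toReal.aestronglyMeasurable 1
      (Filter.Eventually.of_forall fun ω => ?_)
    rw [Real.norm_of_nonneg ENNReal.toReal_nonneg]
    exact ENNReal.toReal_le_of_le_ofReal zero_le_one (by simpa using hple _)
  have hm0 : MeasurableSpace.comap (Y 0) mH ≤ mΩ := hY0meas.comap_le
  refine ae_eq_condExp_of_forall_setIntegral_eq hm0 (hpint.indicator hBm)
    (fun s _ _ => integrable_condExp.integrableOn) (fun S hS _ => ?_)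
    stronglyMeasurable_condExp.aestronglyMeasurable
  have hSm : MeasurableSet S := hm0 _ hS
  have hSF : MeasurableSet[F m] S := (le_sup_left : _ ≤ F m) _ hS
  rw [setIntegral_condExp hm0 ((integrable_const (1 : ℝ)).indicator hB1m) hS,
    setIntegral_indicator hB1m, setIntegral_indicator hBm,
    integral_toReal (f := fun ω => p (m + 1) (Y m ω)) (hpm.comp hYm).aemeasurable
      (Filter.Eventually.of_forall fun ω => (hple _).trans_lt ENNReal.one_lt_top)]
  have key := freezing_aux P (hFle m hmN) (Y m) (Z (m + 1)) (hYF m hmN) hZm hind (S ∩ B)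
    (@MeasurableSet.inter _ (F m) _ _ hSF (hBF m hmN)) Q hQm
  simp only [← hpQ] at key
  rw [← key, hBs, Set.inter_assoc]
  simp [Measure.real]
end

section
/- Assume the Setting. Then for every n ∈ {1,...,N} it holds P-almost surely that 1_{{𝒱(Y_0) ≥ c^{1/(1−α)}·θ}} · P(∩_{k=0}^{n} A_k | σ(Y_0)) ≥ inf( { p_n(v) : v ∈ ℍ_{n−1} with 𝒱(v) ≥ θ^{(α^{n−1})} } ∪ {1} ) · 1_{{𝒱(Y_0) ≥ c^{1/(1−α)}·θ}} · P(∩_{k=0}^{n−1} A_k | σ(Y_0)). -/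
open MeasureTheory ProbabilityTheory
open scoped ENNReal

/-- Freezing inequality for independent random variables. -/
lemma aux_freeze {Ω Ω' U : Type*} [MeasurableSpace Ω] [MeasurableSpace Ω'] [MeasurableSpace U]
    (P : Measure Ω) [IsProbabilityMeasure P] (X : Ω → Ω') (Z : Ω → U)
    (hX : Measurable X) (hZ : Measurable Z) (hind : IndepFun X Z P)
    (C : Set Ω') (hC : MeasurableSet C) (S : Set (Ω' × U)) (hS : MeasurableSet S)
    (q : ℝ≥0∞) (hq : ∀ x ∈ C, q ≤ P {ω | (x, Z ω) ∈ S}) :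
    q * P (X ⁻¹' C) ≤ P {ω | X ω ∈ C ∧ (X ω, Z ω) ∈ S} := by
  have hmap := (indepFun_iff_map_prod_eq_prod_map_map hX.aemeasurable hZ.aemeasurable).1 hind
  have hCS : MeasurableSet ((Prod.fst ⁻¹' C) ∩ S : Set (Ω' × U)) :=
    (measurable_fst hC).inter hS
  have h1 : P {ω | X ω ∈ C ∧ (X ω, Z ω) ∈ S}
      = (P.map (fun ω => (X ω, Z ω))) ((Prod.fst ⁻¹' C) ∩ S) := by
    rw [Measure.map_apply (hX.prodMk hZ) hCS]; rfl
  have : IsProbabilityMeasure (P.map Z) := Measure.isProbabilityMeasure_map hZ.aemeasurable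
  rw [h1, hmap, Measure.prod_apply hCS, ← Measure.map_apply hX hC,
    ← lintegral_indicator_const hC]
  refine lintegral_mono fun x => ?_
  by_cases hx : x ∈ C
  · rw [Set.indicator_of_mem hx]
    refine (hq x hx).trans (le_of_eq ?_)
    rw [Measure.map_apply hZ (measurable_prodMk_left hCS)]
    congr 1
    ext ω
    simp [hx]
  · rw [Set.indicator_of_notMem hx]; exact zero_le

lemma aux_step {Ω H U : Type*} (G : MeasurableSpace Ω) [mΩ : MeasurableSpace Ω] [MeasurableSpace H] [mU : MeasurableSpace U]
    (P : Measure Ω) [IsProbabilityMeasure P] (hG : G ≤ mΩ)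
    (y : Ω → H) (hy : Measurable[G] y) (Z : Ω → U) (hZ : Measurable[mΩ] Z)
    (hind : Indep G (MeasurableSpace.comap Z mU) P)
    (C : Set Ω) (hC : MeasurableSet[G] C) (T : Set (H × U)) (hT : MeasurableSet T)
    (q : ℝ≥0∞) (hq : ∀ ω ∈ C, q ≤ P {ω' | (y ω, Z ω') ∈ T}) :
    q * P C ≤ P (C ∩ {ω | (y ω, Z ω) ∈ T}) := by
  by_cases hq' : q = 0
  · simp [hq']
  have hX : Measurable[G] (fun ω => (y ω, ω ∈ C)) :=
    hy.prodMk ((@measurableSet_setOf _ G (fun ω => ω ∈ C)).1 hC)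
  have hpm : Measurable (fun v : H => P {ω' | (v, Z ω') ∈ T}) := by
    have : (fun v : H => P {ω' | (v, Z ω') ∈ T})
        = fun v : H => (P.map Z) (Prod.mk v ⁻¹' T) := by
      ext v
      rw [Measure.map_apply hZ (measurable_prodMk_left hT)]; rfl
    rw [this]
    have : IsProbabilityMeasure (P.map Z) := Measure.isProbabilityMeasure_map hZ.aemeasurable
    exact measurable_measure_prodMk_left hT
  have hmeas1 : MeasurableSet {x : H × Prop | x.2 ∧ q ≤ P {ω' | (x.1, Z ω') ∈ T}} :=
    (measurableSet_setOf.2 measurable_snd).inter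
      (measurableSet_le measurable_const (hpm.comp measurable_fst))
  have key := aux_freeze P (fun ω => (y ω, ω ∈ C)) Z (hX.mono hG le_rfl) hZ
    (by
      refine indep_of_indep_of_le_left hind ?_
      exact hX.comap_le)
    {x : H × Prop | x.2 ∧ q ≤ P {ω' | (x.1, Z ω') ∈ T}} hmeas1
    {x : (H × Prop) × U | (x.1.1, x.2) ∈ T}
    (((measurable_fst.comp measurable_fst).prodMk measurable_snd) hT) q
    (fun x hx => hx.2)
  refine le_trans (le_of_eq ?_) (key.trans (measure_mono ?_))
  · congr 2
    ext ω
    exact ⟨fun h => ⟨h, hq ω h⟩, fun h => h.1⟩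
  · rintro ω ⟨⟨h1, -⟩, h2⟩
    exact ⟨h1, h2⟩

lemma aux_indep {Ω : Type*} (m F K L : MeasurableSpace Ω) [mΩ : MeasurableSpace Ω]
    (P : Measure Ω) [IsProbabilityMeasure P]
    (hm : m ≤ mΩ) (hL : L ≤ mΩ) (hF : F ≤ L) (hK : K ≤ L)
    (h1 : Indep m L P) (h2 : Indep F K P) : Indep (m ⊔ F) K P := by
  have hgen : m ⊔ F = MeasurableSpace.generateFrom
      {s | ∃ a b, MeasurableSet[m] a ∧ MeasurableSet[F] b ∧ a ∩ b = s} := by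
    apply le_antisymm
    · refine sup_le ?_ ?_
      · intro s hs
        exact MeasurableSpace.measurableSet_generateFrom
          ⟨s, Set.univ, hs, MeasurableSet.univ, by simp⟩
      · intro s hs
        exact MeasurableSpace.measurableSet_generateFrom
          ⟨Set.univ, s, MeasurableSet.univ, hs, by simp⟩
    · refine MeasurableSpace.generateFrom_le ?_
      rintro _ ⟨a, b, ha, hb, rfl⟩
      exact MeasurableSet.inter ((le_sup_left : m ≤ m ⊔ F) a ha) ((le_sup_right : F ≤ m ⊔ F) b hb)
  refine IndepSets.indep (sup_le hm (hF.trans hL)) (hK.trans hL) ?_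
    (@MeasurableSpace.isPiSystem_measurableSet _ K) hgen
    (@MeasurableSpace.generateFrom_measurableSet _ K).symm ?_
  · rintro _ ⟨a, b, ha, hb, rfl⟩ _ ⟨a', b', ha', hb', rfl⟩ -
    exact ⟨a ∩ a', b ∩ b', ha.inter ha', hb.inter hb', by ext; simp; tauto⟩
  · rw [IndepSets_iff]
    rintro _ k ⟨a, b, ha, hb, rfl⟩ hk
    rw [Indep_iff] at h1 h2
    rw [Set.inter_assoc, h1 a (b ∩ k) ha ((hF b hb).inter (hK k hk)), h2 b k hb hk,
      h1 a b ha (hF b hb), mul_assoc]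

lemma aux_condExp {Ω : Type*} (m : MeasurableSpace Ω) [mΩ : MeasurableSpace Ω]
    (P : Measure Ω) [IsProbabilityMeasure P] (hm : m ≤ mΩ)
    (B D E : Set Ω) (hB : MeasurableSet[m] B) (hD : MeasurableSet D) (hE : MeasurableSet E)
    (q : ℝ≥0∞) (hq : q ≠ ∞)
    (h : ∀ s, MeasurableSet[m] s → q * P (s ∩ B ∩ D) ≤ P (s ∩ B ∩ E)) :
    ∀ᵐ ω ∂P, q.toReal * Set.indicator B (fun _ => (1 : ℝ)) ω *
        (P[Set.indicator D (fun _ => (1 : ℝ)) | m]) ω ≤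
      Set.indicator B (fun _ => (1 : ℝ)) ω * (P[Set.indicator E (fun _ => (1 : ℝ)) | m]) ω := by
  have hi : ∀ D : Set Ω, MeasurableSet D → Integrable (Set.indicator D (fun _ => (1 : ℝ))) P :=
    fun D hD => (integrable_const (1 : ℝ)).indicator hD
  have hsm : ∀ D : Set Ω, StronglyMeasurable[m]
      (B.indicator (P[Set.indicator D (fun _ => (1 : ℝ)) | m])) :=
    fun D => stronglyMeasurable_condExp.indicator hB
  have hint : ∀ D : Set Ω, Integrable
      (B.indicator (P[Set.indicator D (fun _ => (1 : ℝ)) | m])) P :=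
    fun D => integrable_condExp.indicator (hm _ hB)
  have hval : ∀ D : Set Ω, MeasurableSet D → ∀ s, MeasurableSet[m] s →
      ∫ ω in s, (B.indicator (P[Set.indicator D (fun _ => (1 : ℝ)) | m])) ω ∂P
        = (P (s ∩ B ∩ D)).toReal := by
    intro D hD s hs
    rw [setIntegral_indicator (hm _ hB), setIntegral_condExp hm (hi D hD) (hs.inter hB),
      setIntegral_indicator hD]
    simp [Measure.real]
  have hle : (fun ω => q.toReal * (B.indicator (P[Set.indicator D (fun _ => (1 : ℝ)) | m])) ω)
      ≤ᵐ[P.trim hm] (B.indicator (P[Set.indicator E (fun _ => (1 : ℝ)) | m])) := by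
    refine ae_le_of_forall_setIntegral_le (((hint D).const_mul _).trim hm ((hsm D).const_mul _))
      ((hint E).trim hm (hsm E)) fun s hs _ => ?_
    rw [← setIntegral_trim hm ((hsm D).const_mul _) hs, ← setIntegral_trim hm (hsm E) hs,
      integral_const_mul, hval D hD s hs, hval E hE s hs, ← ENNReal.toReal_mul]
    exact ENNReal.toReal_mono (measure_ne_top _ _) (h s hs)
  filter_upwards [ae_le_of_ae_le_trim hle] with ω hω
  by_cases hωB : ω ∈ B
  · simpa [hωB] using hω
  · simp [hωB]

lemma aux_growth (c α θ : ℝ) (hc0 : 0 < c) (hc1 : c ≤ 1) (hα : 1 < α) (hθ : 1 < θ)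
    (x : ℕ → ℝ) (n : ℕ) (h0 : c ^ (1 / (1 - α)) * θ ≤ x 0)
    (hx : ∀ k < n, c * x k ^ α ≤ x (k + 1)) : θ ^ (α ^ n) ≤ x n := by
  have hθ0 : 0 < θ := by linarith
  have key : ∀ k ≤ n, c ^ (1 / (1 - α)) * θ ^ (α ^ k) ≤ x k := by
    intro k
    induction k with
    | zero => intro _; simpa using h0
    | succ k ih =>
      intro hk
      refine le_trans ?_ (hx k (by omega))
      have hp : 0 < c ^ (1 / (1 - α)) * θ ^ (α ^ k) := by positivity
      have h2 := Real.rpow_le_rpow hp.le (ih (by omega)) (by linarith : 0 ≤ α)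
      refine le_trans (le_of_eq ?_) (mul_le_mul_of_nonneg_left h2 hc0.le)
      rw [Real.mul_rpow (by positivity) (by positivity), ← Real.rpow_mul hc0.le,
        ← Real.rpow_mul hθ0.le, ← mul_assoc, pow_succ]
      congr 1
      have h3 : c * c ^ (1 / (1 - α) * α) = c ^ (1 + 1 / (1 - α) * α) := by
        rw [Real.rpow_add hc0, Real.rpow_one]
      rw [h3]
      congr 1
      have : 1 - α ≠ 0 := by linarith
      field_simp
      ring
  refine le_trans ?_ (key n le_rfl)
  have h1 : 1 ≤ c ^ (1 / (1 - α)) := by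
    apply Real.one_le_rpow_of_pos_of_le_one_of_nonpos hc0 hc1
    exact div_nonpos_of_nonneg_of_nonpos zero_le_one (by linarith)
  have : 0 < θ ^ (α ^ n) := by positivity
  nlinarith

/-- In the abstract Markov-chain setting, for every `n ∈ {1,...,N}` it holds `P`-almost surely
that, on the event `{𝒱(Y_0) ≥ c^{1/(1−α)}·θ}`, the conditional probability of `∩_{k=0}^{n} A_k`
given `σ(Y_0)` is at least
`inf({p_n(v) : v ∈ ℍ_{n−1}, 𝒱(v) ≥ θ^{α^{n−1}}} ∪ {1})` times the conditional probability of
`∩_{k=0}^{n−1} A_k` given `σ(Y_0)`. -/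
theorem conditional_probability_lower_step
    {H U Ω : Type*} [mH : MeasurableSpace H] [mU : MeasurableSpace U] [mΩ : MeasurableSpace Ω]
    (P : Measure Ω) [IsProbabilityMeasure P]
    (Φ : H → U → H) (hΦ : Measurable (Function.uncurry Φ))
    (N : ℕ) (hN : 1 ≤ N)
    (c α θ : ℝ) (hc0 : 0 < c) (hc1 : c ≤ 1) (hα : 1 < α) (hθ : 1 < θ)
    (Hs : ℕ → Set H) (hHs : ∀ n ≤ N, MeasurableSet (Hs n))
    (Z : ℕ → Ω → U) (hZmeas : ∀ n, 1 ≤ n → n ≤ N → Measurable (Z n))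
    (hZindep : iIndepFun (m := fun _ => mU) (fun n : (Finset.Icc 1 N) => Z (n : ℕ)) P)
    (hZid : ∀ n, 1 ≤ n → n ≤ N → P.map (Z n) = P.map (Z 1))
    (Y : ℕ → Ω → H) (hY0meas : Measurable (Y 0))
    (hYrec : ∀ n, 1 ≤ n → n ≤ N → ∀ ω, Y n ω = Φ (Y (n - 1) ω) (Z n ω))
    (hYZindep : Indep (MeasurableSpace.comap (Y 0) mH)
        (⨆ n ∈ Finset.Icc 1 N, MeasurableSpace.comap (Z n) mU) P)
    (V : H → ℝ) (hV : Measurable V) (hVpos : ∀ x, 0 ≤ V x)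
    (A : ℕ → Set Ω)
    (hA0 : A 0 = {ω | Y 0 ω ∈ Hs 0})
    (hA : ∀ n, 1 ≤ n → n ≤ N →
        A n = {ω | c * V (Y (n - 1) ω) ^ α ≤ V (Y n ω) ∧ Y n ω ∈ Hs n})
    (p : ℕ → H → ℝ≥0∞)
    (hp : ∀ n, 1 ≤ n → n ≤ N → ∀ v : H,
        p n v = P {ω | c * V v ^ α ≤ V (Φ v (Z n ω)) ∧ Φ v (Z n ω) ∈ Hs n}) :
    ∀ n, 1 ≤ n → n ≤ N →
      ∀ᵐ ω ∂P,
        (sInf ((p n '' {v | v ∈ Hs (n - 1) ∧ θ ^ (α ^ (n - 1)) ≤ V v}) ∪ {1})).toReal *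
            Set.indicator {ω' | c ^ (1 / (1 - α)) * θ ≤ V (Y 0 ω')} (fun _ => (1 : ℝ)) ω *
            (P[Set.indicator (⋂ k ∈ Finset.Iic (n - 1), A k) (fun _ => (1 : ℝ)) |
                MeasurableSpace.comap (Y 0) mH]) ω ≤
          Set.indicator {ω' | c ^ (1 / (1 - α)) * θ ≤ V (Y 0 ω')} (fun _ => (1 : ℝ)) ω *
            (P[Set.indicator (⋂ k ∈ Finset.Iic n, A k) (fun _ => (1 : ℝ)) |
                MeasurableSpace.comap (Y 0) mH]) ω := by
  intro n hn1 hnN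
  set m := MeasurableSpace.comap (Y 0) mH with hmdef
  have hm : m ≤ mΩ := hY0meas.comap_le
  set L := ⨆ n ∈ Finset.Icc 1 N, MeasurableSpace.comap (Z n) mU with hLdef
  have hL : L ≤ mΩ := iSup₂_le fun k hk =>
    (hZmeas k (Finset.mem_Icc.1 hk).1 (Finset.mem_Icc.1 hk).2).comap_le
  set F := ⨆ k ∈ Finset.Icc 1 (n - 1), MeasurableSpace.comap (Z k) mU with hFdef
  have hZF : ∀ k, 1 ≤ k → k ≤ n - 1 → MeasurableSpace.comap (Z k) mU ≤ F := fun k h1 h2 =>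
    le_iSup₂_of_le (f := fun k (_ : k ∈ Finset.Icc 1 (n - 1)) => MeasurableSpace.comap (Z k) mU)
      k (Finset.mem_Icc.2 ⟨h1, h2⟩) le_rfl
  have hZL : ∀ k, 1 ≤ k → k ≤ N → MeasurableSpace.comap (Z k) mU ≤ L := fun k h1 h2 =>
    le_iSup₂_of_le (f := fun k (_ : k ∈ Finset.Icc 1 N) => MeasurableSpace.comap (Z k) mU)
      k (Finset.mem_Icc.2 ⟨h1, h2⟩) le_rfl
  have hFL : F ≤ L := iSup₂_le fun k hk => by
    rw [Finset.mem_Icc] at hk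
    exact hZL k hk.1 (by omega)
  have hFK : Indep F (MeasurableSpace.comap (Z n) mU) P := by
    have h := indep_iSup_of_disjoint
      (m := fun k : (Finset.Icc 1 N) => MeasurableSpace.comap (Z (k : ℕ)) mU)
      (fun k => (hZmeas k (Finset.mem_Icc.1 k.2).1 (Finset.mem_Icc.1 k.2).2).comap_le)
      hZindep (S := {k | (k : ℕ) < n}) (T := {k | (k : ℕ) = n}) (by
        rw [Set.disjoint_left]
        intro a ha hb
        simp only [Set.mem_ofPred_eq] at ha hb
        omega)
    refine indep_of_indep_of_le_left (indep_of_indep_of_le_right h ?_) ?_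
    · exact le_iSup₂_of_le (f := fun (k : (Finset.Icc 1 N)) (_ : k ∈ {k : (Finset.Icc 1 N) | (k : ℕ) = n}) =>
        MeasurableSpace.comap (Z (k : ℕ)) mU) ⟨n, Finset.mem_Icc.2 ⟨hn1, hnN⟩⟩ rfl le_rfl
    · refine iSup₂_le fun k hk => ?_
      rw [Finset.mem_Icc] at hk
      exact le_iSup₂_of_le (f := fun (k : (Finset.Icc 1 N)) (_ : k ∈ {k : (Finset.Icc 1 N) | (k : ℕ) < n}) =>
        MeasurableSpace.comap (Z (k : ℕ)) mU) ⟨k, Finset.mem_Icc.2 ⟨hk.1, by omega⟩⟩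
        (show k < n by omega) le_rfl
  set G := m ⊔ F with hGdef
  have hG : G ≤ mΩ := sup_le hm (hFL.trans hL)
  have hGK : Indep G (MeasurableSpace.comap (Z n) mU) P :=
    aux_indep (mΩ := mΩ) m F _ L P hm hL hFL (hZL n hn1 hnN) hYZindep hFK
  have hYG : ∀ k ≤ n - 1, Measurable[G] (Y k) := by
    intro k
    induction k with
    | zero =>
      intro _
      exact measurable_iff_comap_le.2 (le_sup_left : m ≤ G)
    | succ k ih =>
      intro hk
      have e : Y (k + 1) = fun ω => Function.uncurry Φ (Y k ω, Z (k + 1) ω) := by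
        ext ω
        exact hYrec (k + 1) (by omega) (by omega) ω
      have hz : Measurable[G] (Z (k + 1)) :=
        measurable_iff_comap_le.2 ((hZF (k + 1) (by omega) hk).trans le_sup_right)
      rw [e]
      exact hΦ.comp ((ih (by omega)).prodMk hz)
  have hAG : ∀ k ≤ n - 1, MeasurableSet[G] (A k) := by
    intro k hk
    rcases Nat.eq_zero_or_pos k with rfl | hk0
    · rw [hA0]
      exact hYG 0 (by omega) (hHs 0 (by omega))
    · rw [hA k hk0 (by omega)]
      have h1 : Measurable[G] (fun ω => c * V (Y (k - 1) ω) ^ α) :=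
        ((hV.comp (hYG (k - 1) (by omega))).pow_const α).const_mul c
      have h2 : Measurable[G] (fun ω => V (Y k ω)) := hV.comp (hYG k hk)
      exact MeasurableSet.inter (measurableSet_le h1 h2) (hYG k hk (hHs k (by omega)))
  have hDG : MeasurableSet[G] (⋂ k ∈ Finset.Iic (n - 1), A k) :=
    Finset.measurableSet_biInter _ fun k hk => hAG k (Finset.mem_Iic.1 hk)
  set T : Set (H × U) := {x | c * V x.1 ^ α ≤ V (Φ x.1 x.2) ∧ Φ x.1 x.2 ∈ Hs n} with hT
  have hTm : MeasurableSet T :=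
    MeasurableSet.inter (measurableSet_le (((hV.comp measurable_fst).pow_const α).const_mul c)
      (hV.comp hΦ)) (hΦ (hHs n hnN))
  have hAn : A n = {ω | (Y (n - 1) ω, Z n ω) ∈ T} := by
    rw [hA n hn1 hnN]
    ext ω
    simp only [hT, Set.mem_ofPred_eq, hYrec n hn1 hnN ω]
  have hAnm : MeasurableSet[mΩ] (A n) := by
    rw [hAn]
    exact (((hYG (n - 1) le_rfl).mono hG le_rfl).prodMk (hZmeas n hn1 hnN)) hTm
  have hDn : (⋂ k ∈ Finset.Iic n, A k) = (⋂ k ∈ Finset.Iic (n - 1), A k) ∩ A n := by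
    ext ω
    simp only [Set.mem_iInter, Finset.mem_Iic, Set.mem_inter_iff]
    constructor
    · exact fun h => ⟨fun k hk => h k (by omega), h n le_rfl⟩
    · rintro ⟨h1, h2⟩ k hk
      rcases Nat.lt_or_ge (n - 1) k with h | h
      · obtain rfl : k = n := by omega
        exact h2
      · exact h1 k h
  have hB : MeasurableSet[m] {ω' | c ^ (1 / (1 - α)) * θ ≤ V (Y 0 ω')} :=
    ⟨{v | c ^ (1 / (1 - α)) * θ ≤ V v}, measurableSet_le measurable_const hV, rfl⟩
  rw [hDn]
  refine aux_condExp (mΩ := mΩ) m P hm _ _ _ hB (hG _ hDG) ((hG _ hDG).inter hAnm) _ ?_ ?_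
  · exact ne_top_of_le_ne_top ENNReal.one_ne_top (sInf_le (Or.inr rfl))
  · intro s hs
    rw [← Set.inter_assoc, hAn]
    refine aux_step (mΩ := mΩ) G P hG (Y (n - 1)) (hYG _ le_rfl) (Z n) (hZmeas n hn1 hnN) hGK _
      (MeasurableSet.inter ((le_sup_left : m ≤ G) _ (hs.inter hB)) hDG) T hTm _ ?_
    rintro ω ⟨⟨-, hω0⟩, hωD⟩
    simp only [Set.mem_iInter, Finset.mem_Iic] at hωD
    refine sInf_le (Or.inl ⟨Y (n - 1) ω, ⟨?_, ?_⟩, hp n hn1 hnN _⟩)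
    · have h := hωD (n - 1) le_rfl
      rcases Nat.eq_zero_or_pos (n - 1) with h0 | h0
      · rw [h0] at h ⊢
        rw [hA0] at h
        exact h
      · rw [hA (n - 1) h0 (by omega)] at h
        exact h.2
    · refine aux_growth c α θ hc0 hc1 hα hθ (fun k => V (Y k ω)) (n - 1) hω0 ?_
      intro k hk
      have h := hωD (k + 1) (by omega)
      rw [hA (k + 1) (by omega) (by omega)] at h
      exact h.1
end

section
/- Assume the Setting. Then E[𝒱(Y_N)] ≥ c^{(Σ_{k=0}^{N−1} α^k)} · E[ 𝒱(Y_0)^{(α^N)} · P( ∩_{n=0}^{N} [ {𝒱(Y_n) ≥ c^{(Σ_{k=0}^{n−1} α^k)} · 𝒱(Y_0)^{(α^n)}} ∩ {Y_n ∈ ℍ_n} ] | σ(Y_0) ) ] (with the empty sum Σ_{k=0}^{−1} α^k = 0; both sides take values in [0,∞]). -/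
open MeasureTheory ProbabilityTheory
open scoped ENNReal

theorem lintegral_mul_condExp_indicator_aux {Ω : Type*} {m mΩ : MeasurableSpace Ω}
    (P : Measure Ω) [IsProbabilityMeasure P] (hm : m ≤ mΩ) (A : Set Ω) (hA : MeasurableSet A)
    (f : Ω → ℝ≥0∞) (hf : Measurable[m] f) :
    ∫⁻ ω, f ω * ENNReal.ofReal ((P[Set.indicator A (fun _ => (1 : ℝ)) | m]) ω) ∂P
      = ∫⁻ ω in A, f ω ∂P := by
  have hint : Integrable (Set.indicator A (fun _ => (1 : ℝ))) P :=
    (integrable_const (1 : ℝ)).indicator hA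
  have hnn : 0 ≤ᵐ[P] P[Set.indicator A (fun _ => (1 : ℝ)) | m] :=
    condExp_nonneg (Filter.Eventually.of_forall fun ω =>
      Set.indicator_nonneg (fun _ _ => zero_le_one) ω)
  have hg : Measurable (fun ω => ENNReal.ofReal ((P[Set.indicator A (fun _ => (1 : ℝ)) | m]) ω)) :=
    (stronglyMeasurable_condExp.measurable.mono hm le_rfl).ennreal_ofReal
  have hmeas : (P.withDensity (fun ω =>
      ENNReal.ofReal ((P[Set.indicator A (fun _ => (1 : ℝ)) | m]) ω))).trim hm
      = (P.restrict A).trim hm := by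
    refine @Measure.ext _ m _ _ fun s hs => ?_
    rw [trim_measurableSet_eq hm hs, trim_measurableSet_eq hm hs,
      withDensity_apply _ (hm s hs), Measure.restrict_apply (hm s hs),
      ← ofReal_integral_eq_lintegral_ofReal integrable_condExp.integrableOn
        (ae_restrict_of_ae hnn),
      setIntegral_condExp hm hint hs, setIntegral_indicator hA]
    simp
  calc _ = ∫⁻ ω, f ω ∂(P.withDensity (fun ω =>
      ENNReal.ofReal ((P[Set.indicator A (fun _ => (1 : ℝ)) | m]) ω))) := by
        rw [lintegral_withDensity_eq_lintegral_mul _ hg (hf.mono hm le_rfl)]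
        simp [mul_comm]
    _ = _ := by rw [← lintegral_trim hm hf, hmeas, lintegral_trim hm hf]

/-- Reverse a priori bound: in the abstract Markov-chain setting,
`E[𝒱(Y_N)] ≥ c^{Σ_{k<N} α^k} · E[𝒱(Y_0)^{α^N} · P(∩_{n=0}^{N} [{𝒱(Y_n) ≥
c^{Σ_{k<n} α^k}·𝒱(Y_0)^{α^n}} ∩ {Y_n ∈ ℍ_n}] | σ(Y_0))]`. -/
theorem reverse_a_priori_bound
    {H U Ω : Type*} [mH : MeasurableSpace H] [mU : MeasurableSpace U] [mΩ : MeasurableSpace Ω]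
    (P : Measure Ω) [IsProbabilityMeasure P]
    (Φ : H → U → H) (hΦ : Measurable (Function.uncurry Φ))
    (N : ℕ) (hN : 1 ≤ N)
    (c α θ : ℝ) (hc0 : 0 < c) (hc1 : c ≤ 1) (hα : 1 < α) (hθ : 1 < θ)
    (Hs : ℕ → Set H) (hHs : ∀ n ≤ N, MeasurableSet (Hs n))
    (Z : ℕ → Ω → U) (hZmeas : ∀ n, 1 ≤ n → n ≤ N → Measurable (Z n))
    (hZindep : iIndepFun (fun n : (Finset.Icc 1 N) => Z (n : ℕ)) P)
    (hZid : ∀ n, 1 ≤ n → n ≤ N → P.map (Z n) = P.map (Z 1))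
    (Y : ℕ → Ω → H) (hY0meas : Measurable (Y 0))
    (hYrec : ∀ n, 1 ≤ n → n ≤ N → ∀ ω, Y n ω = Φ (Y (n - 1) ω) (Z n ω))
    (hYZindep : Indep (MeasurableSpace.comap (Y 0) mH)
        (⨆ n ∈ Finset.Icc 1 N, MeasurableSpace.comap (Z n) mU) P)
    (V : H → ℝ) (hV : Measurable V) (hVpos : ∀ x, 0 ≤ V x) :
    ENNReal.ofReal (c ^ (∑ k ∈ Finset.range N, α ^ k)) *
        ∫⁻ ω, ENNReal.ofReal (V (Y 0 ω) ^ (α ^ N) *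
          (P[Set.indicator (⋂ n ∈ Finset.Iic N,
              {ω' | c ^ (∑ k ∈ Finset.range n, α ^ k) * V (Y 0 ω') ^ (α ^ n) ≤ V (Y n ω') ∧
                Y n ω' ∈ Hs n}) (fun _ => (1 : ℝ)) |
              MeasurableSpace.comap (Y 0) mH]) ω) ∂P ≤
      ∫⁻ ω, ENNReal.ofReal (V (Y N ω)) ∂P := by
  have hYm : ∀ n, n ≤ N → Measurable (Y n) := by
    intro n
    induction n with
    | zero => exact fun _ => hY0meas
    | succ k ih =>
      intro hk
      have h : Y (k + 1) = fun ω => Function.uncurry Φ (Y k ω, Z (k + 1) ω) := by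
        funext ω
        exact hYrec (k + 1) (by omega) hk ω
      rw [h]
      exact hΦ.comp ((ih (by omega)).prodMk (hZmeas (k + 1) (by omega) hk))
  have hm : MeasurableSpace.comap (Y 0) mH ≤ mΩ := hY0meas.comap_le
  set A : Set Ω := ⋂ n ∈ Finset.Iic N,
    {ω' | c ^ (∑ k ∈ Finset.range n, α ^ k) * V (Y 0 ω') ^ (α ^ n) ≤ V (Y n ω') ∧
      Y n ω' ∈ Hs n} with hAdef
  have hA : MeasurableSet A := by
    refine Finset.measurableSet_biInter _ fun n hn => ?_
    have hn' : n ≤ N := Finset.mem_Iic.mp hn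
    exact (measurableSet_le (((hV.comp hY0meas).pow_const _).const_mul _)
      (hV.comp (hYm n hn'))).inter (hYm n hn' (hHs n hn'))
  have hf : Measurable[MeasurableSpace.comap (Y 0) mH]
      (fun ω => ENNReal.ofReal (V (Y 0 ω) ^ (α ^ N))) := by
    have h : Measurable fun x => ENNReal.ofReal (V x ^ (α ^ N)) :=
      (hV.pow_const _).ennreal_ofReal
    exact h.comp (comap_measurable (Y 0))
  have hc : 0 ≤ c ^ (∑ k ∈ Finset.range N, α ^ k) := Real.rpow_nonneg hc0.le _
  simp_rw [ENNReal.ofReal_mul (Real.rpow_nonneg (hVpos _) _)]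
  rw [lintegral_mul_condExp_indicator_aux P hm A hA _ hf,
    ← lintegral_const_mul _ (hf.mono hm le_rfl)]
  refine (setLIntegral_mono' hA fun ω hω => ?_).trans (setLIntegral_le_lintegral A _)
  rw [← ENNReal.ofReal_mul hc]
  have h := Set.mem_iInter₂.mp hω N (Finset.mem_Iic.mpr le_rfl)
  exact ENNReal.ofReal_le_ofReal h.1
end

section
/- Assume the Setting. Then E[𝒱(Y_N)] ≥ θ^{(α^N)} · P( {Y_0 ∈ ℍ_0} ∩ {𝒱(Y_0) ≥ c^{1/(1−α)}·θ} ) · [ Π_{n=1}^{N} inf( { P( {𝒱(Φ(v,Z_1)) ≥ c·𝒱(v)^α} ∩ {Φ(v,Z_1) ∈ ℍ_n} ) : v ∈ ℍ_{n−1} with 𝒱(v) ≥ θ^{(α^{n−1})} } ∪ {1} ) ] (both sides take values in [0,∞]). -/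
open MeasureTheory ProbabilityTheory
open scoped ENNReal

lemma aux_indep_s7 {Ω : Type*} {mΩ : MeasurableSpace Ω} (P : Measure Ω) [IsProbabilityMeasure P]
    (m0 mA mB : MeasurableSpace Ω) (h0 : m0 ≤ mΩ) (hA : mA ≤ mΩ) (hB : mB ≤ mΩ)
    (h1 : Indep m0 (mA ⊔ mB) P) (h2 : Indep mA mB P) : Indep (m0 ⊔ mA) mB P := by
  have hpi : IsPiSystem {u | ∃ s t, MeasurableSet[m0] s ∧ MeasurableSet[mA] t ∧ u = s ∩ t} := by
    rintro _ ⟨s, t, hs, ht, rfl⟩ _ ⟨s', t', hs', ht', rfl⟩ _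
    exact ⟨s ∩ s', t ∩ t', hs.inter hs', ht.inter ht', by
      ext; simp only [Set.mem_inter_iff]; tauto⟩
  have hgen : m0 ⊔ mA = MeasurableSpace.generateFrom
      {u | ∃ s t, MeasurableSet[m0] s ∧ MeasurableSet[mA] t ∧ u = s ∩ t} := by
    apply le_antisymm
    · apply sup_le
      · intro s hs
        exact MeasurableSpace.measurableSet_generateFrom ⟨s, Set.univ, hs, MeasurableSet.univ, by simp⟩
      · intro s hs
        exact MeasurableSpace.measurableSet_generateFrom ⟨Set.univ, s, MeasurableSet.univ, hs, by simp⟩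
    · apply MeasurableSpace.generateFrom_le
      rintro _ ⟨s, t, hs, ht, rfl⟩
      exact MeasurableSet.inter ((le_sup_left : m0 ≤ m0 ⊔ mA) _ hs)
        ((le_sup_right : mA ≤ m0 ⊔ mA) _ ht)
  refine IndepSets.indep (sup_le h0 hA) hB hpi
    (@MeasurableSpace.isPiSystem_measurableSet Ω mB) hgen
    (@MeasurableSpace.generateFrom_measurableSet Ω mB).symm ?_
  rw [IndepSets_iff]
  rintro _ u ⟨s, t, hs, ht, rfl⟩ hu
  rw [Indep_iff] at h1 h2
  have ht' : MeasurableSet[mA ⊔ mB] t := (le_sup_left : mA ≤ mA ⊔ mB) _ ht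
  have hu' : MeasurableSet[mA ⊔ mB] u := (le_sup_right : mB ≤ mA ⊔ mB) _ hu
  rw [Set.inter_assoc, h1 s (t ∩ u) hs (MeasurableSet.inter ht' hu'), h2 t u ht hu, h1 s t hs ht',
    mul_assoc]

lemma aux_step_s7 {H U Ω : Type*} [MeasurableSpace H] [MeasurableSpace U] [MeasurableSpace Ω]
    (P : Measure Ω) [IsProbabilityMeasure P] (Y : Ω → H) (Z : Ω → U) (hY : Measurable Y)
    (hZ : Measurable Z) (hi : IndepFun Y Z P) (A : Set H) (hA : MeasurableSet A)
    (B : Set (H × U)) (hB : MeasurableSet B) (q : ℝ≥0∞)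
    (hq : ∀ y ∈ A, q ≤ P.map Z {z | (y, z) ∈ B}) :
    P (Y ⁻¹' A) * q ≤ P {ω | Y ω ∈ A ∧ (Y ω, Z ω) ∈ B} := by
  have hm := (indepFun_iff_map_prod_eq_prod_map_map hY.aemeasurable hZ.aemeasurable).1 hi
  have : IsProbabilityMeasure (P.map Z) := Measure.isProbabilityMeasure_map hZ.aemeasurable
  have hS : MeasurableSet ((Prod.fst ⁻¹' A) ∩ B) := (measurable_fst hA).inter hB
  have e : P {ω | Y ω ∈ A ∧ (Y ω, Z ω) ∈ B}
      = P.map (fun ω => (Y ω, Z ω)) ((Prod.fst ⁻¹' A) ∩ B) := by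
    rw [Measure.map_apply (hY.prodMk hZ) hS]; rfl
  rw [e, hm, Measure.prod_apply hS, ← Measure.map_apply hY hA, mul_comm, ← setLIntegral_const]
  refine le_trans ?_ (setLIntegral_le_lintegral A _)
  refine setLIntegral_mono' hA fun y hy => (hq y hy).trans (measure_mono ?_)
  intro z hz
  exact ⟨hy, hz⟩

theorem abstract_divergence_bound
    {H U Ω : Type*} [mH : MeasurableSpace H] [mU : MeasurableSpace U] [mΩ : MeasurableSpace Ω]
    (P : Measure Ω) [IsProbabilityMeasure P]
    (Φ : H → U → H) (hΦ : Measurable (Function.uncurry Φ))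
    (N : ℕ) (hN : 1 ≤ N)
    (c α θ : ℝ) (hc0 : 0 < c) (hc1 : c ≤ 1) (hα : 1 < α) (hθ : 1 < θ)
    (Hs : ℕ → Set H) (hHs : ∀ n ≤ N, MeasurableSet (Hs n))
    (Z : ℕ → Ω → U) (hZmeas : ∀ n, 1 ≤ n → n ≤ N → Measurable (Z n))
    (hZindep : iIndepFun (m := fun _ => mU) (fun n : (Finset.Icc 1 N) => Z (n : ℕ)) P)
    (hZid : ∀ n, 1 ≤ n → n ≤ N → P.map (Z n) = P.map (Z 1))
    (Y : ℕ → Ω → H) (hY0meas : Measurable (Y 0))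
    (hYrec : ∀ n, 1 ≤ n → n ≤ N → ∀ ω, Y n ω = Φ (Y (n - 1) ω) (Z n ω))
    (hYZindep : Indep (MeasurableSpace.comap (Y 0) mH)
        (⨆ n ∈ Finset.Icc 1 N, MeasurableSpace.comap (Z n) mU) P)
    (V : H → ℝ) (hV : Measurable V) (hVpos : ∀ x, 0 ≤ V x) :
    ENNReal.ofReal (θ ^ (α ^ N)) *
        P ({ω | Y 0 ω ∈ Hs 0} ∩ {ω | c ^ (1 / (1 - α)) * θ ≤ V (Y 0 ω)}) *
        ∏ n ∈ Finset.Icc 1 N,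
          sInf (((fun v => P {ω | c * V v ^ α ≤ V (Φ v (Z 1 ω)) ∧ Φ v (Z 1 ω) ∈ Hs n}) ''
            {v | v ∈ Hs (n - 1) ∧ θ ^ (α ^ (n - 1)) ≤ V v}) ∪ {1}) ≤
      ∫⁻ ω, ENNReal.ofReal (V (Y N ω)) ∂P := by
  set κ : ℝ := c ^ (1 / (1 - α)) with hκ
  set q : ℕ → ℝ≥0∞ := fun n => sInf (((fun v => P {ω | c * V v ^ α ≤ V (Φ v (Z 1 ω)) ∧
    Φ v (Z 1 ω) ∈ Hs n}) '' {v | v ∈ Hs (n - 1) ∧ θ ^ (α ^ (n - 1)) ≤ V v}) ∪ {1}) with hqdef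
  have hκ1 : 1 ≤ κ := Real.one_le_rpow_of_pos_of_le_one_of_nonpos hc0 hc1
    (div_nonpos_of_nonneg_of_nonpos zero_le_one (by linarith))
  have hκ0 : 0 < κ := by linarith
  have hcκ : c * κ ^ α = κ := by
    have h1α : (1 - α) ≠ 0 := by linarith
    rw [hκ, ← Real.rpow_mul hc0.le]
    nth_rewrite 1 [← Real.rpow_one c]
    rw [← Real.rpow_add hc0]
    congr 1
    field_simp
    ring
  let F : ℕ → MeasurableSpace Ω := fun n =>
    MeasurableSpace.comap (Y 0) mH ⊔ ⨆ k ∈ Finset.Icc 1 n, MeasurableSpace.comap (Z k) mU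
  have hYF : ∀ n ≤ N, Measurable[F n] (Y n) := by
    intro n
    induction n with
    | zero =>
      intro _
      exact (comap_measurable (Y 0)).mono le_sup_left le_rfl
    | succ n ih =>
      intro hn
      have hle : F n ≤ F (n + 1) := by
        refine sup_le_sup le_rfl (biSup_mono fun k hk => ?_)
        simp only [Finset.mem_Icc] at hk ⊢
        omega
      have h1 : Measurable[F (n + 1)] (Y n) := (ih (by omega)).mono hle le_rfl
      have hle2 : MeasurableSpace.comap (Z (n + 1)) mU ≤ F (n + 1) :=
        le_sup_of_le_right (le_iSup₂_of_le (n + 1) (by simp) le_rfl)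
      have h2 : Measurable[F (n + 1)] (Z (n + 1)) :=
        (comap_measurable (Z (n + 1))).mono hle2 le_rfl
      have e : Y (n + 1) = Function.uncurry Φ ∘ fun ω => (Y n ω, Z (n + 1) ω) := by
        funext ω
        have := hYrec (n + 1) (by omega) hn ω
        simpa using this
      rw [e]
      exact hΦ.comp (Measurable.prodMk h1 h2)
  have hZle : ∀ n ≤ N, (⨆ k ∈ Finset.Icc 1 n, MeasurableSpace.comap (Z k) mU) ≤ mΩ := by
    intro n hn
    refine iSup₂_le fun k hk => ?_
    rw [Finset.mem_Icc] at hk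
    exact (hZmeas k hk.1 (by omega)).comap_le
  have hFle : ∀ n ≤ N, F n ≤ mΩ := fun n hn => sup_le hY0meas.comap_le (hZle n hn)
  have hYm : ∀ n ≤ N, Measurable (Y n) := fun n hn => (hYF n hn).mono (hFle n hn) le_rfl
  have hInd : ∀ n, n + 1 ≤ N → IndepFun (Y n) (Z (n + 1)) P := by
    intro n hn
    have hAB : Indep (⨆ k ∈ Finset.Icc 1 n, MeasurableSpace.comap (Z k) mU)
        (MeasurableSpace.comap (Z (n + 1)) mU) P := by
      have h := indep_iSup_of_disjoint
        (m := fun k : (Finset.Icc 1 N) => MeasurableSpace.comap (Z (k : ℕ)) mU)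
        (fun k => (hZmeas k (Finset.mem_Icc.1 k.2).1 (Finset.mem_Icc.1 k.2).2).comap_le)
        hZindep (S := {k | (k : ℕ) ≤ n}) (T := {k | (k : ℕ) = n + 1})
        (by
          rw [Set.disjoint_left]
          intro a ha hb
          simp only [Set.mem_ofPred_eq] at ha hb
          omega)
      refine indep_of_indep_of_le_left (indep_of_indep_of_le_right h ?_) ?_
      · exact le_iSup₂_of_le (⟨n + 1, by simp; omega⟩ : Finset.Icc 1 N) rfl le_rfl
      · refine iSup₂_le fun k hk => ?_
        rw [Finset.mem_Icc] at hk
        exact le_iSup₂_of_le (⟨k, by simp; omega⟩ : Finset.Icc 1 N) hk.2 le_rfl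
    have h3 : Indep (F n) (MeasurableSpace.comap (Z (n + 1)) mU) P := by
      refine aux_indep_s7 P _ _ _ hY0meas.comap_le (hZle n (by omega))
        (hZmeas (n + 1) (by omega) hn).comap_le ?_ hAB
      refine indep_of_indep_of_le_right hYZindep (sup_le ?_ ?_)
      · refine biSup_mono fun k hk => ?_
        simp only [Finset.mem_Icc] at hk ⊢
        omega
      · exact le_iSup₂_of_le (n + 1) (by simp; omega) le_rfl
    rw [IndepFun_iff_Indep]
    exact indep_of_indep_of_le_left h3 (hYF n (by omega)).comap_le
  let A : ℕ → Set H := fun n => Hs n ∩ {v | κ * θ ^ (α ^ n) ≤ V v}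
  have hAm : ∀ n ≤ N, MeasurableSet (A n) := fun n hn =>
    (hHs n hn).inter (measurableSet_le measurable_const hV)
  have hmain : ∀ n ≤ N, P (Y 0 ⁻¹' A 0) * ∏ k ∈ Finset.Icc 1 n, q k ≤ P (Y n ⁻¹' A n) := by
    intro n
    induction n with
    | zero => intro _; simp
    | succ n ih =>
      intro hn
      have hVα : Measurable fun p : H × U => c * V p.1 ^ α :=
        ((hV.comp measurable_fst).pow_const α).const_mul c
      have hB : MeasurableSet {p : H × U | c * V p.1 ^ α ≤ V (Φ p.1 p.2) ∧ Φ p.1 p.2 ∈ Hs (n + 1)} :=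
        (measurableSet_le hVα (hV.comp hΦ)).inter (hΦ (hHs (n + 1) hn))
      rw [Finset.prod_Icc_succ_top (by omega), ← mul_assoc]
      refine (mul_le_mul_left (ih (by omega)) _).trans ?_
      refine (aux_step_s7 P (Y n) (Z (n + 1)) (hYm n (by omega)) (hZmeas _ (by omega) hn) (hInd n hn)
        (A n) (hAm n (by omega)) _ hB (q (n + 1)) ?_).trans (measure_mono ?_)
      · intro y hy
        have hBy : MeasurableSet {z | (y, z) ∈ {p : H × U | c * V p.1 ^ α ≤ V (Φ p.1 p.2) ∧
            Φ p.1 p.2 ∈ Hs (n + 1)}} := measurable_prodMk_left hB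
        rw [hZid (n + 1) (by omega) hn, Measure.map_apply (hZmeas 1 le_rfl hN) hBy]
        refine sInf_le (Or.inl ⟨y, ⟨by simpa using hy.1, ?_⟩, rfl⟩)
        have h0 : 0 < θ ^ (α ^ n) := Real.rpow_pos_of_pos (by linarith) _
        have h1 : κ * θ ^ (α ^ n) ≤ V y := hy.2
        simp only [Nat.add_sub_cancel]
        nlinarith
      · rintro ω ⟨hω, h1, h2⟩
        have e := hYrec (n + 1) (by omega) hn ω
        simp only [Nat.add_sub_cancel] at e
        simp only at h1 h2
        rw [← e] at h1 h2
        refine ⟨h2, ?_⟩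
        have h3 : κ * θ ^ (α ^ n) ≤ V (Y n ω) := hω.2
        have h0 : 0 < θ ^ (α ^ n) := Real.rpow_pos_of_pos (by linarith) _
        have h4 : (κ * θ ^ (α ^ n)) ^ α ≤ V (Y n ω) ^ α :=
          Real.rpow_le_rpow (by positivity) h3 (by linarith)
        rw [Real.mul_rpow hκ0.le h0.le, ← Real.rpow_mul (x := θ) (by linarith), ← pow_succ] at h4
        have h5 := mul_le_mul_of_nonneg_left h4 hc0.le
        rw [← mul_assoc, hcκ] at h5
        exact h5.trans h1
  have hstart : P ({ω | Y 0 ω ∈ Hs 0} ∩ {ω | κ * θ ≤ V (Y 0 ω)}) = P (Y 0 ⁻¹' A 0) := by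
    congr 1
    ext ω
    simp [A]
  rw [hstart, mul_assoc]
  refine (mul_le_mul_right (hmain N le_rfl) _).trans ?_
  rw [← setLIntegral_const]
  refine (setLIntegral_mono' (hYm N le_rfl (hAm N le_rfl)) fun ω hω => ?_).trans
    (setLIntegral_le_lintegral _ _)
  refine ENNReal.ofReal_le_ofReal ?_
  have h0 : 0 < θ ^ (α ^ N) := Real.rpow_pos_of_pos (by linarith) _
  have h1 : κ * θ ^ (α ^ N) ≤ V (Y N ω) := hω.2
  nlinarith
end

section
/- Let (H,𝓗) and (U,𝓤) be measurable spaces, let Φ: H×U → H be (𝓗⊗𝓤)/𝓗-measurable, let (Ω,𝓕,P) be a probability space, let ℍ ∈ 𝓗, N ∈ ℕ = {1,2,3,...}, c ∈ (0,1], α, θ ∈ (1,∞), let Z_1,...,Z_N : Ω → U be i.i.d. random variables, let Y_0, Y_1, ..., Y_N : Ω → H be random variables satisfying Y_n = Φ(Y_{n−1}, Z_n) for all n ∈ {1,...,N}, assume that σ(Y_0) and σ(Z_1,...,Z_N) are independent, and let 𝒱 : H → [0,∞) be 𝓗/Borel-measurable. Then E[𝒱(Y_N)] ≥ θ^{(α^N)}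 · P( {Y_0 ∈ ℍ} ∩ {𝒱(Y_0) ≥ c^{1/(1−α)}·θ} ) · [ Π_{n=1}^{N} inf( { P( {𝒱(Φ(v,Z_1)) ≥ c·𝒱(v)^α} ∩ {Φ(v,Z_1) ∈ ℍ} ) : v ∈ ℍ with 𝒱(v) ≥ θ^{(α^{n−1})} } ∪ {1} ) ] (both sides take values in [0,∞]). -/
open MeasureTheory ProbabilityTheory
open scoped ENNReal

theorem aux_indep_sup {Ω : Type*} {mΩ : MeasurableSpace Ω} {P : Measure Ω}
    [IsProbabilityMeasure P] {m1 m2 m3 m23 : MeasurableSpace Ω}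
    (h1 : m1 ≤ mΩ) (h2 : m2 ≤ mΩ) (h3 : m3 ≤ mΩ) (h2' : m2 ≤ m23) (h3' : m3 ≤ m23)
    (hA : Indep m1 m23 P) (hB : Indep m2 m3 P) : Indep (m1 ⊔ m2) m3 P := by
  rw [Indep_iff] at hA hB
  refine IndepSets.indep
    (p1 := {s | ∃ a b, MeasurableSet[m1] a ∧ MeasurableSet[m2] b ∧ s = a ∩ b})
    (p2 := {s | MeasurableSet[m3] s}) (sup_le h1 h2) h3 ?_ ?_ ?_ ?_ ?_
  · rintro _ ⟨a, b, ha, hb, rfl⟩ _ ⟨a', b', ha', hb', rfl⟩ _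
    exact ⟨a ∩ a', b ∩ b', ha.inter ha', hb.inter hb', Set.inter_inter_inter_comm _ _ _ _⟩
  · exact @MeasurableSpace.isPiSystem_measurableSet _ m3
  · apply le_antisymm
    · apply sup_le
      · intro a ha
        exact MeasurableSpace.measurableSet_generateFrom
          ⟨a, Set.univ, ha, MeasurableSet.univ, by simp⟩
      · intro b hb
        exact MeasurableSpace.measurableSet_generateFrom
          ⟨Set.univ, b, MeasurableSet.univ, hb, by simp⟩
    · apply MeasurableSpace.generateFrom_le
      rintro _ ⟨a, b, ha, hb, rfl⟩
      exact MeasurableSet.inter (le_sup_left (a := m1) (b := m2) _ ha)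
        (le_sup_right (a := m1) (b := m2) _ hb)
  · exact (@MeasurableSpace.generateFrom_measurableSet _ m3).symm
  · rw [IndepSets_iff]
    rintro _ t ⟨a, b, ha, hb, rfl⟩ ht
    have ht' : MeasurableSet[m3] t := ht
    rw [Set.inter_assoc, hA a (b ∩ t) ha (MeasurableSet.inter (h2' _ hb) (h3' _ ht')),
      hB b t hb ht', hA a b ha (h2' _ hb), mul_assoc]

theorem aux_step_s8 {H U Ω : Type*} [MeasurableSpace H] [MeasurableSpace U] [MeasurableSpace Ω]
    {P : Measure Ω} [IsProbabilityMeasure P] {X : Ω → H} {Z Z1 : Ω → U}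
    (hX : Measurable X) (hZ : Measurable Z) (hZ1 : Measurable Z1)
    (hid : P.map Z = P.map Z1) (hind : IndepFun X Z P)
    {A : Set H} (hA : MeasurableSet A) {S : Set (H × U)} (hS : MeasurableSet S)
    {I : ℝ≥0∞} (hI : ∀ v ∈ A, I ≤ P {ω | (v, Z1 ω) ∈ S}) :
    P {ω | X ω ∈ A} * I ≤ P {ω | X ω ∈ A ∧ (X ω, Z ω) ∈ S} := by
  have hT : MeasurableSet ((Prod.fst ⁻¹' A) ∩ S : Set (H × U)) := (measurable_fst hA).inter hS
  have e1 : P {ω | X ω ∈ A ∧ (X ω, Z ω) ∈ S}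
      = (P.map (fun ω => (X ω, Z ω))) ((Prod.fst ⁻¹' A) ∩ S) := by
    rw [Measure.map_apply (hX.prodMk hZ) hT]; rfl
  have : IsProbabilityMeasure (P.map Z1) := Measure.isProbabilityMeasure_map hZ1.aemeasurable
  rw [e1, hind.map_prod_eq_prod_map_map hX.aemeasurable hZ.aemeasurable, hid,
    Measure.prod_apply hT]
  have e2 : P {ω | X ω ∈ A} * I = ∫⁻ x, A.indicator (fun _ => I) x ∂(P.map X) := by
    rw [lintegral_indicator hA, setLIntegral_const, Measure.map_apply hX hA, mul_comm]; rfl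
  rw [e2]
  apply lintegral_mono
  intro x
  by_cases hx : x ∈ A
  · simp only [Set.indicator_of_mem hx]
    rw [Measure.map_apply hZ1 (measurable_prodMk_left hT)]
    refine (hI x hx).trans (measure_mono ?_)
    intro ω hω
    exact ⟨hx, hω⟩
  · simp [Set.indicator_of_notMem hx]

/-- Corollary of the main abstract lower bound with a single measurable set `ℍ`:
`E[𝒱(Y_N)] ≥ θ^{α^N} · P({Y_0 ∈ ℍ} ∩ {𝒱(Y_0) ≥ c^{1/(1−α)}·θ}) ·
Π_{n=1}^{N} inf({P({𝒱(Φ(v,Z_1)) ≥ c·𝒱(v)^α} ∩ {Φ(v,Z_1) ∈ ℍ}) :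
v ∈ ℍ, 𝒱(v) ≥ θ^{α^{n−1}}} ∪ {1})`. -/
theorem abstract_divergence_bound_single_set
    {H U Ω : Type*} [mH : MeasurableSpace H] [mU : MeasurableSpace U] [mΩ : MeasurableSpace Ω]
    (P : Measure Ω) [IsProbabilityMeasure P]
    (Φ : H → U → H) (hΦ : Measurable (Function.uncurry Φ))
    (Hset : Set H) (hHset : MeasurableSet Hset)
    (N : ℕ) (hN : 1 ≤ N)
    (c α θ : ℝ) (hc0 : 0 < c) (hc1 : c ≤ 1) (hα : 1 < α) (hθ : 1 < θ)
    (Z : ℕ → Ω → U) (hZmeas : ∀ n, 1 ≤ n → n ≤ N → Measurable (Z n))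
    (hZindep : iIndepFun (m := fun _ => mU) (fun n : (Finset.Icc 1 N) => Z (n : ℕ)) P)
    (hZid : ∀ n, 1 ≤ n → n ≤ N → P.map (Z n) = P.map (Z 1))
    (Y : ℕ → Ω → H) (hY0meas : Measurable (Y 0))
    (hYrec : ∀ n, 1 ≤ n → n ≤ N → ∀ ω, Y n ω = Φ (Y (n - 1) ω) (Z n ω))
    (hYZindep : Indep (MeasurableSpace.comap (Y 0) mH)
        (⨆ n ∈ Finset.Icc 1 N, MeasurableSpace.comap (Z n) mU) P)
    (V : H → ℝ) (hV : Measurable V) (hVpos : ∀ x, 0 ≤ V x) :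
    ENNReal.ofReal (θ ^ (α ^ N)) *
        P ({ω | Y 0 ω ∈ Hset} ∩ {ω | c ^ (1 / (1 - α)) * θ ≤ V (Y 0 ω)}) *
        ∏ n ∈ Finset.Icc 1 N,
          sInf (((fun v => P {ω | c * V v ^ α ≤ V (Φ v (Z 1 ω)) ∧ Φ v (Z 1 ω) ∈ Hset}) ''
            {v | v ∈ Hset ∧ θ ^ (α ^ (n - 1)) ≤ V v}) ∪ {1}) ≤
      ∫⁻ ω, ENNReal.ofReal (V (Y N ω)) ∂P := by
  set K : ℝ := c ^ (1 / (1 - α)) with hK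
  have hK1 : 1 ≤ K :=
    Real.one_le_rpow_of_pos_of_le_one_of_nonpos hc0 hc1
      (by apply div_nonpos_of_nonneg_of_nonpos <;> linarith)
  have hK0 : 0 < K := by linarith
  have hKα : c * K ^ α = K := by
    have h1 : (1 - α) ≠ 0 := by linarith
    rw [hK, ← Real.rpow_mul hc0.le]
    nth_rewrite 1 [← Real.rpow_one c]
    rw [← Real.rpow_add hc0]
    congr 1
    field_simp
    ring
  have hθ0 : 0 < θ := by linarith
  -- measurability
  have hYm : ∀ n, n ≤ N → Measurable (Y n) := by
    intro n
    induction n with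
    | zero => intro _; exact hY0meas
    | succ k ih =>
      intro hk
      have : Y (k + 1) = fun ω => Function.uncurry Φ (Y k ω, Z (k + 1) ω) := by
        funext ω
        simpa using hYrec (k + 1) (by omega) hk ω
      rw [this]
      exact hΦ.comp ((ih (by omega)).prodMk (hZmeas _ (by omega) hk))
  have hZle : ∀ n, 1 ≤ n → n ≤ N → MeasurableSpace.comap (Z n) mU ≤ mΩ :=
    fun n h1 h2 => (hZmeas n h1 h2).comap_le
  -- independence of the past from the future
  have hind : ∀ n, n ≤ N → Indep (MeasurableSpace.comap (Y n) mH)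
      (⨆ k ∈ Finset.Icc (n + 1) N, MeasurableSpace.comap (Z k) mU) P := by
    intro n
    induction n with
    | zero => intro _; simpa using hYZindep
    | succ k ih =>
      intro hk
      have hB : Indep (MeasurableSpace.comap (Z (k + 1)) mU)
          (⨆ j ∈ Finset.Icc (k + 1 + 1) N, MeasurableSpace.comap (Z j) mU) P := by
        rw [iIndepFun_iff_iIndep] at hZindep
        have hk1 : k + 1 ∈ Finset.Icc 1 N := by simp; omega
        have := indep_iSup_of_disjoint
          (m := fun n : (Finset.Icc 1 N) => MeasurableSpace.comap (Z (n : ℕ)) mU)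
          (fun i => hZle i (Finset.mem_Icc.1 i.2).1 (Finset.mem_Icc.1 i.2).2) hZindep
          (S := {⟨k + 1, hk1⟩}) (T := {i | k + 1 < (i : ℕ)}) (by simp)
        refine indep_of_indep_of_le this ?_ ?_
        · simp
        · refine iSup₂_le fun j hj => ?_
          have hj' := Finset.mem_Icc.1 hj
          have hj1 : j ∈ Finset.Icc 1 N := by simp; omega
          exact le_iSup₂_of_le (f := fun (i : (Finset.Icc 1 N)) (_ : i ∈ {i : (Finset.Icc 1 N) | k + 1 < (i : ℕ)}) =>
            MeasurableSpace.comap (Z (i : ℕ)) mU) ⟨j, hj1⟩ (by simp; omega) le_rfl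
      have hmain := aux_indep_sup (hYm k (by omega)).comap_le (hZle (k + 1) (by omega) hk)
        (iSup₂_le fun j hj => hZle j (by have := Finset.mem_Icc.1 hj; omega)
          (Finset.mem_Icc.1 hj).2)
        (le_iSup₂_of_le (f := fun j (_ : j ∈ Finset.Icc (k + 1) N) =>
            MeasurableSpace.comap (Z j) mU) (k + 1) (by simp; omega) le_rfl)
        (iSup₂_le fun j hj => le_iSup₂_of_le (f := fun j (_ : j ∈ Finset.Icc (k + 1) N) =>
            MeasurableSpace.comap (Z j) mU) j
            (by have := Finset.mem_Icc.1 hj; simp; omega) le_rfl)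
        (ih (by omega)) hB
      refine indep_of_indep_of_le_left hmain ?_
      have e : Y (k + 1) = fun ω => Function.uncurry Φ (Y k ω, Z (k + 1) ω) := by
        funext ω
        simpa using hYrec (k + 1) (by omega) hk ω
      rw [e]
      apply Measurable.comap_le
      refine hΦ.comp (Measurable.prodMk ?_ ?_)
      · exact (comap_measurable (Y k)).mono le_sup_left le_rfl
      · exact (comap_measurable (Z (k + 1))).mono le_sup_right le_rfl
  have hindF : ∀ n, n + 1 ≤ N → IndepFun (Y n) (Z (n + 1)) P := by
    intro n hn
    rw [IndepFun_iff_Indep]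
    exact indep_of_indep_of_le_right (hind n (by omega))
      (le_iSup₂_of_le (f := fun j (_ : j ∈ Finset.Icc (n + 1) N) =>
            MeasurableSpace.comap (Z j) mU) (n + 1) (by simp; omega) le_rfl)
  set I : ℕ → ℝ≥0∞ := fun n =>
    sInf (((fun v => P {ω | c * V v ^ α ≤ V (Φ v (Z 1 ω)) ∧ Φ v (Z 1 ω) ∈ Hset}) ''
            {v | v ∈ Hset ∧ θ ^ (α ^ (n - 1)) ≤ V v}) ∪ {1}) with hI
  let A : ℕ → Set H := fun n => {v | v ∈ Hset ∧ K * θ ^ (α ^ n) ≤ V v}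
  have hAm : ∀ n, MeasurableSet (A n) := fun n =>
    hHset.inter (measurableSet_le measurable_const hV)
  let S : Set (H × U) := {p | c * V p.1 ^ α ≤ V (Φ p.1 p.2) ∧ Φ p.1 p.2 ∈ Hset}
  have hSm : MeasurableSet S :=
    (measurableSet_le (((hV.comp measurable_fst).pow_const α).const_mul c) (hV.comp hΦ)).inter
      (hΦ hHset)
  have hbound : ∀ n, n ≤ N →
      P {ω | Y 0 ω ∈ A 0} * ∏ k ∈ Finset.Icc 1 n, I k ≤ P {ω | Y n ω ∈ A n} := by
    intro n
    induction n with
    | zero => intro _; simp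
    | succ k ih =>
      intro hk
      rw [Finset.prod_Icc_succ_top (by omega), ← mul_assoc]
      refine (mul_le_mul_left (ih (by omega)) _).trans ?_
      refine (aux_step_s8 (hYm k (by omega)) (hZmeas (k + 1) (by omega) hk) (hZmeas 1 le_rfl hN)
        (hZid _ (by omega) hk) (hindF k hk) (hAm k) hSm (I := I (k + 1)) ?_).trans ?_
      · intro v hv
        refine sInf_le (Or.inl ⟨v, ⟨hv.1, ?_⟩, rfl⟩)
        have h2 := hv.2
        have h3 : 0 < θ ^ (α ^ k) := Real.rpow_pos_of_pos hθ0 _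
        simp only [Nat.add_sub_cancel]
        nlinarith
      · apply measure_mono
        rintro ω ⟨h1, h2⟩
        have e := hYrec (k + 1) (by omega) hk ω
        simp only [Nat.add_sub_cancel] at e
        show Y (k + 1) ω ∈ A (k + 1)
        rw [e]
        refine ⟨h2.2, le_trans ?_ h2.1⟩
        have h3 : 0 < θ ^ (α ^ k) := Real.rpow_pos_of_pos hθ0 _
        calc K * θ ^ (α ^ (k + 1)) = c * (K * θ ^ (α ^ k)) ^ α := by
              rw [Real.mul_rpow hK0.le h3.le, ← mul_assoc, hKα, ← Real.rpow_mul hθ0.le, pow_succ]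
          _ ≤ c * V (Y k ω) ^ α := by
              have := Real.rpow_le_rpow (by positivity) h1.2 (by linarith : (0:ℝ) ≤ α)
              exact mul_le_mul_of_nonneg_left this hc0.le
  have e0 : ({ω | Y 0 ω ∈ Hset} ∩ {ω | K * θ ≤ V (Y 0 ω)}) = {ω | Y 0 ω ∈ A 0} := by
    ext ω
    simp [A]
  rw [e0, mul_assoc]
  refine (mul_le_mul_right (hbound N le_rfl) _).trans ?_
  refine le_trans ?_ (mul_meas_ge_le_lintegral₀
    ((hV.comp (hYm N le_rfl)).ennreal_ofReal.aemeasurable) (ENNReal.ofReal (θ ^ (α ^ N))))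
  refine mul_le_mul_right (measure_mono ?_) _
  intro ω hω
  refine ENNReal.ofReal_le_ofReal ?_
  have h2 : K * θ ^ (α ^ N) ≤ V (Y N ω) := hω.2
  have h3 : 0 < θ ^ (α ^ N) := Real.rpow_pos_of_pos hθ0 _
  simp only [Function.comp]
  nlinarith
end

section
/- Let (H,𝓗) and (U,𝓤) be measurable spaces, let Φ: H×U → H be (𝓗⊗𝓤)/𝓗-measurable, let (Ω,𝓕,P) be a probability space, let N ∈ ℕ = {1,2,3,...}, c ∈ (0,1], α, θ ∈ (1,∞), let Z_1,...,Z_N : Ω → U be i.i.d. random variables, let Y_0, Y_1, ..., Y_N : Ω → H be random variables satisfying Y_n = Φ(Y_{n−1}, Z_n) for all n ∈ {1,...,N}, assume that σ(Y_0) and σ(Z_1,...,Z_N) are independent, and let 𝒱 : H → [0,∞) be 𝓗/Borel-measurable. Then E[𝒱(Y_N)] ≥ θ^{(α^N)} · P( 𝒱(Y_0) ≥ c^{1/(1−α)}·θ ) · [ Π_{n=1}^{N} inf( { P( 𝒱(Φ(v,Z_1)) ≥ c·𝒱(v)^α ) : v ∈ H with 𝒱(v) ≥ θ^{(α^{n−1})}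 } ∪ {1} ) ] (both sides take values in [0,∞]). -/
open MeasureTheory ProbabilityTheory
open scoped ENNReal

lemma indep_assoc_aux {Ω : Type*} {m1 m2 m3 : MeasurableSpace Ω} [mΩ : MeasurableSpace Ω]
    (P : Measure Ω) [IsProbabilityMeasure P] (h1 : m1 ≤ mΩ) (h2 : m2 ≤ mΩ) (h3 : m3 ≤ mΩ)
    (h : Indep m1 (m2 ⊔ m3) P) (h' : Indep m2 m3 P) : Indep (m1 ⊔ m2) m3 P := by
  refine IndepSets.indep (p1 := Set.image2 (· ∩ ·) {s | MeasurableSet[m1] s}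
    {s | MeasurableSet[m2] s}) (p2 := {s | MeasurableSet[m3] s}) (sup_le h1 h2) h3 ?_ ?_ ?_ ?_ ?_
  · rintro _ ⟨a, ha, b, hb, rfl⟩ _ ⟨a', ha', b', hb', rfl⟩ -
    exact ⟨a ∩ a', MeasurableSet.inter ha ha', b ∩ b', MeasurableSet.inter hb hb',
      Set.inter_inter_inter_comm _ _ _ _⟩
  · exact @MeasurableSpace.isPiSystem_measurableSet Ω m3
  · apply le_antisymm
    · refine sup_le (fun s hs => ?_) (fun s hs => ?_)
      · exact MeasurableSpace.measurableSet_generateFrom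
          ⟨s, hs, Set.univ, @MeasurableSet.univ _ m2, Set.inter_univ s⟩
      · exact MeasurableSpace.measurableSet_generateFrom
          ⟨Set.univ, @MeasurableSet.univ _ m1, s, hs, Set.univ_inter s⟩
    · refine MeasurableSpace.generateFrom_le ?_
      rintro _ ⟨a, ha, b, hb, rfl⟩
      have l1 : m1 ≤ m1 ⊔ m2 := le_sup_left
      have l2 : m2 ≤ m1 ⊔ m2 := le_sup_right
      exact @MeasurableSet.inter _ (m1 ⊔ m2) _ _ (l1 _ ha) (l2 _ hb)
  · exact (@MeasurableSpace.generateFrom_measurableSet Ω m3).symm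
  · rw [IndepSets_iff]
    rintro _ t ⟨a, ha, b, hb, rfl⟩ ht
    have l2 : m2 ≤ m2 ⊔ m3 := le_sup_left
    have l3 : m3 ≤ m2 ⊔ m3 := le_sup_right
    rw [Indep_iff] at h h'
    have e1 := h a (b ∩ t) ha (@MeasurableSet.inter _ (m2 ⊔ m3) _ _ (l2 _ hb) (l3 _ ht))
    have e2 := h a b ha (l2 _ hb)
    have e3 := h' b t hb ht
    simp only [Set.inter_assoc]
    rw [e1, e2, e3, mul_assoc]

lemma step_aux {H U Ω : Type*} [MeasurableSpace H] [MeasurableSpace U] [MeasurableSpace Ω]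
    (P : Measure Ω) [IsProbabilityMeasure P] (Y : Ω → H) (Z Z' : Ω → U)
    (hY : Measurable Y) (hZ : Measurable Z) (hZ' : Measurable Z')
    (hid : P.map Z = P.map Z') (hind : IndepFun Y Z P)
    (B : Set (H × U)) (hB : MeasurableSet B) (A : Set H) (hA : MeasurableSet A) (p : ℝ≥0∞)
    (hp : ∀ v ∈ A, p ≤ P {ω | (v, Z' ω) ∈ B}) :
    P (Y ⁻¹' A) * p ≤ P {ω | Y ω ∈ A ∧ (Y ω, Z ω) ∈ B} := by
  have e : P {ω | Y ω ∈ A ∧ (Y ω, Z ω) ∈ B} =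
      (P.map (fun ω => (Y ω, Z ω))) ((A ×ˢ Set.univ) ∩ B) := by
    rw [Measure.map_apply (by fun_prop) ((hA.prod MeasurableSet.univ).inter hB)]
    congr 1
    ext ω
    simp
  have := Measure.isProbabilityMeasure_map (μ := P) hZ.aemeasurable
  rw [e, (indepFun_iff_map_prod_eq_prod_map_map hY.aemeasurable hZ.aemeasurable).1 hind,
    Measure.prod_apply ((hA.prod MeasurableSet.univ).inter hB)]
  calc P (Y ⁻¹' A) * p = ∫⁻ v in A, p ∂(P.map Y) := by
        rw [setLIntegral_const, Measure.map_apply hY hA, mul_comm]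
    _ ≤ ∫⁻ v in A, (P.map Z) (Prod.mk v ⁻¹' ((A ×ˢ Set.univ) ∩ B)) ∂(P.map Y) := by
        refine setLIntegral_mono' hA (fun v hv => ?_)
        rw [hid, Measure.map_apply hZ'
          (measurable_prodMk_left ((hA.prod MeasurableSet.univ).inter hB))]
        refine (hp v hv).trans (measure_mono ?_)
        intro ω hω
        exact ⟨⟨hv, trivial⟩, hω⟩
    _ ≤ _ := setLIntegral_le_lintegral _ _

/-- Corollary of the main abstract lower bound (Corollary 2.9):
`E[𝒱(Y_N)] ≥ θ^{α^N} · P(𝒱(Y_0) ≥ c^{1/(1−α)}·θ) ·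
Π_{n=1}^{N} inf({P(𝒱(Φ(v,Z_1)) ≥ c·𝒱(v)^α) : v ∈ H, 𝒱(v) ≥ θ^{α^{n−1}}} ∪ {1})`. -/
theorem abstract_divergence_bound_no_set
    {H U Ω : Type*} [mH : MeasurableSpace H] [mU : MeasurableSpace U] [mΩ : MeasurableSpace Ω]
    (P : Measure Ω) [IsProbabilityMeasure P]
    (Φ : H → U → H) (hΦ : Measurable (Function.uncurry Φ))
    (N : ℕ) (hN : 1 ≤ N)
    (c α θ : ℝ) (hc0 : 0 < c) (hc1 : c ≤ 1) (hα : 1 < α) (hθ : 1 < θ)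
    (Z : ℕ → Ω → U) (hZmeas : ∀ n, 1 ≤ n → n ≤ N → Measurable (Z n))
    (hZindep : iIndepFun (m := fun _ => mU) (fun n : (Finset.Icc 1 N) => Z (n : ℕ)) P)
    (hZid : ∀ n, 1 ≤ n → n ≤ N → P.map (Z n) = P.map (Z 1))
    (Y : ℕ → Ω → H) (hY0meas : Measurable (Y 0))
    (hYrec : ∀ n, 1 ≤ n → n ≤ N → ∀ ω, Y n ω = Φ (Y (n - 1) ω) (Z n ω))
    (hYZindep : Indep (MeasurableSpace.comap (Y 0) mH)
        (⨆ n ∈ Finset.Icc 1 N, MeasurableSpace.comap (Z n) mU) P)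
    (V : H → ℝ) (hV : Measurable V) (hVpos : ∀ x, 0 ≤ V x) :
    ENNReal.ofReal (θ ^ (α ^ N)) *
        P {ω | c ^ (1 / (1 - α)) * θ ≤ V (Y 0 ω)} *
        ∏ n ∈ Finset.Icc 1 N,
          sInf (((fun v => P {ω | c * V v ^ α ≤ V (Φ v (Z 1 ω))}) ''
            {v | θ ^ (α ^ (n - 1)) ≤ V v}) ∪ {1}) ≤
      ∫⁻ ω, ENNReal.ofReal (V (Y N ω)) ∂P := by
  have hGle : ∀ k, (⨆ i ∈ Finset.Icc (k + 1) N, MeasurableSpace.comap (Z i) mU) ≤ mΩ := by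
    intro k
    refine iSup₂_le fun i hi => ?_
    rw [Finset.mem_Icc] at hi
    exact (hZmeas i (by omega) hi.2).comap_le
  have key : ∀ k, k ≤ N → Measurable (Y k) ∧ Indep (MeasurableSpace.comap (Y k) mH)
      (⨆ i ∈ Finset.Icc (k + 1) N, MeasurableSpace.comap (Z i) mU) P := by
    intro k
    induction k with
    | zero => exact fun _ => ⟨hY0meas, hYZindep⟩
    | succ k ih =>
      intro hk
      obtain ⟨hYm, hYi⟩ := ih (by omega)
      have hZm := hZmeas (k + 1) (by omega) hk
      have hYe : Y (k + 1) = fun ω => Function.uncurry Φ (Y k ω, Z (k + 1) ω) := by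
        funext ω
        exact hYrec (k + 1) (by omega) hk ω
      refine ⟨by rw [hYe]; exact hΦ.comp (hYm.prodMk hZm), ?_⟩
      have h23 : Indep (MeasurableSpace.comap (Z (k + 1)) mU)
          (⨆ i ∈ Finset.Icc (k + 1 + 1) N, MeasurableSpace.comap (Z i) mU) P := by
        have hd := indep_iSup_of_disjoint (m := fun n : (Finset.Icc 1 N) =>
            MeasurableSpace.comap (Z (n : ℕ)) mU) (S := {n | (n : ℕ) = k + 1})
            (T := {n | k + 1 + 1 ≤ (n : ℕ)})
            (fun n => (hZmeas n (Finset.mem_Icc.1 n.2).1 (Finset.mem_Icc.1 n.2).2).comap_le)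
            hZindep (by
              rw [Set.disjoint_left]
              intro a ha hb
              simp only [Set.mem_ofPred_eq] at ha hb
              omega)
        refine indep_of_indep_of_le_left (indep_of_indep_of_le_right hd ?_) ?_
        · refine iSup₂_le fun i hi => ?_
          rw [Finset.mem_Icc] at hi
          exact le_iSup₂_of_le (⟨i, Finset.mem_Icc.2 ⟨by omega, hi.2⟩⟩ : Finset.Icc 1 N) hi.1 le_rfl
        · exact le_iSup₂_of_le (⟨k + 1, Finset.mem_Icc.2 ⟨by omega, hk⟩⟩ : Finset.Icc 1 N) rfl le_rfl
      have h := indep_assoc_aux P hYm.comap_le hZm.comap_le (hGle (k + 1))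
        (indep_of_indep_of_le_right hYi (sup_le
          (le_iSup₂_of_le (k + 1) (Finset.mem_Icc.2 ⟨le_rfl, hk⟩) le_rfl)
          (iSup₂_le fun i hi => le_iSup₂_of_le i
            (Finset.mem_Icc.2 ⟨by rw [Finset.mem_Icc] at hi; omega, (Finset.mem_Icc.1 hi).2⟩)
            le_rfl))) h23
      refine indep_of_indep_of_le_left h ?_
      refine Measurable.comap_le ?_
      rw [hYe]
      refine hΦ.comp (Measurable.prodMk ?_ ?_)
      · exact Measurable.mono (comap_measurable (Y k)) le_sup_left le_rfl
      · exact Measurable.mono (comap_measurable (Z (k + 1))) le_sup_right le_rfl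
  set κ : ℝ := c ^ (1 / (1 - α)) with hκ
  have hκ1 : 1 ≤ κ := Real.one_le_rpow_of_pos_of_le_one_of_nonpos hc0 hc1
    (div_nonpos_of_nonneg_of_nonpos zero_le_one (by linarith))
  have hκα : c * κ ^ α = κ := by
    rw [hκ, ← Real.rpow_mul hc0.le]
    nth_rewrite 1 [← Real.rpow_one c]
    rw [← Real.rpow_add hc0]
    congr 1
    have : 1 - α ≠ 0 := by linarith
    field_simp
    ring
  have hθ0 : 0 < θ := by linarith
  have main : ∀ k, k ≤ N → P {ω | κ * θ ≤ V (Y 0 ω)} *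
      ∏ n ∈ Finset.Icc 1 k,
          sInf (((fun v => P {ω | c * V v ^ α ≤ V (Φ v (Z 1 ω))}) ''
            {v | θ ^ (α ^ (n - 1)) ≤ V v}) ∪ {1}) ≤ P {ω | κ * θ ^ (α ^ k) ≤ V (Y k ω)} := by
    intro k
    induction k with
    | zero => intro _; simp
    | succ k ih =>
      intro hk
      obtain ⟨hYm, hYi⟩ := key k (by omega)
      have hZm := hZmeas (k + 1) (by omega) hk
      rw [Finset.prod_Icc_succ_top (by omega), ← mul_assoc]
      refine (mul_le_mul_left (ih (by omega)) _).trans ?_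
      have hind : IndepFun (Y k) (Z (k + 1)) P := by
        rw [IndepFun_iff_Indep]
        exact indep_of_indep_of_le_right hYi
          (le_iSup₂_of_le (k + 1) (Finset.mem_Icc.2 ⟨le_rfl, hk⟩) le_rfl)
      have hpos : 0 < θ ^ (α ^ k) := Real.rpow_pos_of_pos hθ0 _
      refine (step_aux P (Y k) (Z (k + 1)) (Z 1) hYm hZm (hZmeas 1 le_rfl hN)
        (hZid _ (by omega) hk) hind
        {x | c * V x.1 ^ α ≤ V (Function.uncurry Φ x)} ?_
        {v | κ * θ ^ (α ^ k) ≤ V v} ?_ _ ?_).trans (measure_mono ?_)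
      · refine measurableSet_le ?_ (hV.comp hΦ)
        exact ((hV.comp measurable_fst).pow_const α).const_mul c
      · exact measurableSet_le measurable_const hV
      · intro v hv
        refine sInf_le (Or.inl ⟨v, ?_, rfl⟩)
        simp only [Nat.add_sub_cancel, Set.mem_ofPred_eq] at hv ⊢
        nlinarith
      · rintro ω ⟨h1, h2⟩
        simp only [Set.mem_ofPred_eq, Function.uncurry_apply_pair] at h1 h2 ⊢
        rw [hYrec (k + 1) (by omega) hk ω, Nat.add_sub_cancel]
        refine le_trans ?_ h2
        have h3 : (κ * θ ^ (α ^ k)) ^ α ≤ V (Y k ω) ^ α :=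
          Real.rpow_le_rpow (by positivity) h1 (by linarith)
        rw [Real.mul_rpow (by linarith) hpos.le, ← Real.rpow_mul hθ0.le, ← pow_succ] at h3
        calc κ * θ ^ (α ^ (k + 1)) = c * (κ ^ α * θ ^ (α ^ (k + 1))) := by
              rw [← mul_assoc, hκα]
          _ ≤ _ := mul_le_mul_of_nonneg_left h3 hc0.le
  rw [mul_assoc]
  refine (mul_le_mul_right (main N le_rfl) _).trans ?_
  refine le_trans (mul_le_mul_right (measure_mono ?_) _) (mul_meas_ge_le_lintegral
    (ENNReal.measurable_ofReal.comp (hV.comp (key N le_rfl).1)) (ENNReal.ofReal (θ ^ (α ^ N))))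
  intro ω hω
  have hpos : 0 < θ ^ (α ^ N) := Real.rpow_pos_of_pos hθ0 _
  simp only [Set.mem_ofPred_eq] at hω
  refine ENNReal.ofReal_le_ofReal ?_
  show θ ^ (α ^ N) ≤ V (Y N ω)
  nlinarith
end

section
/- Let (Ω,𝓕,P) be a probability space, let T, x, η ∈ (0,∞), ν ∈ (1/4, 1], N ∈ ℕ, let γ = Σ_{n=−N}^{N} (η + 4π²n²)^{−2ν}, let v_{−N}, ..., v_N ∈ ℝ, and let β^{−N}, ..., β^{N} : Ω → ℝ be independent centered Gaussian random variables each with variance T/N. Then P( Σ_{n=−N}^{N} (η + 4π²n²)^{−2ν} · |v_n − β^n|² ≤ x² ) ≥ [ x / √(2πγT) ]^{(2N+1)} · exp( −(3N²/T) · ( Σ_{n=−N}^{N} v_n² + x²/γ ) ). -/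
open MeasureTheory ProbabilityTheory Real
open scoped ENNReal

theorem gauss_interval_aux (T r v : ℝ) (hT : 0 < T) (hr : 0 < r) (N : ℕ) (hN : 1 ≤ N) :
    ENNReal.ofReal (r / √(2 * π * T) * Real.exp (-(N / T) * (v ^ 2 + r ^ 2))) ≤
      gaussianReal 0 (Real.toNNReal (T / N)) (Set.Icc (v - r) (v + r)) := by
  have hN' : (1 : ℝ) ≤ N := by exact_mod_cast hN
  have hN0 : (0 : ℝ) < N := by linarith
  have hTN : 0 < T / N := by positivity
  have hv : Real.toNNReal (T / N) ≠ 0 := by simpa using hTN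
  rw [gaussianReal_apply _ hv]
  have key : ∀ y ∈ Set.Icc (v - r) (v + r),
      ENNReal.ofReal ((√(2 * π * T))⁻¹ * Real.exp (-(N / T) * (v ^ 2 + r ^ 2))) ≤
        gaussianPDF 0 (Real.toNNReal (T / N)) y := by
    intro y hy
    rw [gaussianPDF, gaussianPDFReal]
    apply ENNReal.ofReal_le_ofReal
    rw [Real.coe_toNNReal _ hTN.le]
    have h1 : (y - v) ^ 2 ≤ r ^ 2 := by
      apply sq_le_sq'
      · linarith [hy.1]
      · linarith [hy.2]
    have h2 : y ^ 2 ≤ 2 * (v ^ 2 + r ^ 2) := by nlinarith [sq_nonneg (y - 2 * v)]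
    apply mul_le_mul _ _ (Real.exp_pos _).le (by positivity)
    · apply inv_anti₀ (by positivity)
      apply Real.sqrt_le_sqrt
      apply mul_le_mul_of_nonneg_left (div_le_self hT.le hN') (by positivity)
    · apply Real.exp_le_exp.mpr
      have : -(y - 0) ^ 2 / (2 * (T / N)) = -(N / T) * (y ^ 2 / 2) := by
        field_simp
        ring
      rw [this]
      apply mul_le_mul_of_nonpos_left (by linarith)
      have : 0 < N / T := by positivity
      linarith
  calc _ ≤ ENNReal.ofReal ((√(2 * π * T))⁻¹ * Real.exp (-(N / T) * (v ^ 2 + r ^ 2)))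
            * volume (Set.Icc (v - r) (v + r)) := by
        rw [Real.volume_Icc, ← ENNReal.ofReal_mul (by positivity)]
        apply ENNReal.ofReal_le_ofReal
        have : 0 ≤ (√(2 * π * T))⁻¹ * Real.exp (-(N / T) * (v ^ 2 + r ^ 2)) := by positivity
        rw [div_eq_mul_inv]
        nlinarith [mul_nonneg this hr.le]
    _ = ∫⁻ _ in Set.Icc (v - r) (v + r),
          ENNReal.ofReal ((√(2 * π * T))⁻¹ * Real.exp (-(N / T) * (v ^ 2 + r ^ 2))) := by
        rw [setLIntegral_const]
    _ ≤ _ := setLIntegral_mono' measurableSet_Icc key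

/-- Lower bound for the probability that a weighted sum of squared deviations of independent
centered Gaussian random variables (each with variance `T/N`) from given reals `v_n` is at
most `x²`. -/
theorem gaussian_weighted_sum_lower_bound
    {Ω : Type*} [MeasurableSpace Ω] (P : Measure Ω) [IsProbabilityMeasure P]
    (T x η ν : ℝ) (hT : 0 < T) (hx : 0 < x) (hη : 0 < η) (hν : 1 / 4 < ν) (hν' : ν ≤ 1)
    (N : ℕ) (hN : 1 ≤ N)
    (γ : ℝ) (hγ : γ = ∑ n ∈ Finset.Icc (-(N : ℤ)) (N : ℤ),
        (η + 4 * π ^ 2 * (n : ℝ) ^ 2) ^ (-(2 * ν)))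
    (v : ℤ → ℝ) (β : ℤ → Ω → ℝ) (hβmeas : ∀ n : ℤ, Measurable (β n))
    (hβindep : iIndepFun
        (fun n : (Finset.Icc (-(N : ℤ)) (N : ℤ)) => β (n : ℤ)) P)
    (hβlaw : ∀ n ∈ Finset.Icc (-(N : ℤ)) (N : ℤ),
        P.map (β n) = gaussianReal 0 (Real.toNNReal (T / N))) :
    ENNReal.ofReal ((x / Real.sqrt (2 * π * γ * T)) ^ (2 * N + 1) *
        Real.exp (-(3 * (N : ℝ) ^ 2 / T) *
          ((∑ n ∈ Finset.Icc (-(N : ℤ)) (N : ℤ), v n ^ 2) + x ^ 2 / γ))) ≤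
      P {ω | ∑ n ∈ Finset.Icc (-(N : ℤ)) (N : ℤ),
          (η + 4 * π ^ 2 * (n : ℝ) ^ 2) ^ (-(2 * ν)) * |v n - β n ω| ^ 2 ≤ x ^ 2} := by
  have hw : ∀ n : ℤ, 0 < (η + 4 * π ^ 2 * (n : ℝ) ^ 2) ^ (-(2 * ν)) := fun n =>
    Real.rpow_pos_of_pos (by positivity) _
  have hγ0 : 0 < γ := by
    rw [hγ]
    exact Finset.sum_pos (fun n _ => hw n) ⟨0, by simp⟩
  set I := Finset.Icc (-(N : ℤ)) (N : ℤ) with hI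
  have hcard : I.card = 2 * N + 1 := by
    rw [hI, Int.card_Icc]; omega
  have hN' : (1 : ℝ) ≤ N := by exact_mod_cast hN
  obtain ⟨r, hr⟩ : ∃ r, r = x / √γ := ⟨_, rfl⟩
  have hr0 : 0 < r := by rw [hr]; positivity
  have hr2 : r ^ 2 = x ^ 2 / γ := by rw [hr, div_pow, Real.sq_sqrt hγ0.le]
  have hbase : x / √(2 * π * γ * T) = r / √(2 * π * T) := by
    rw [hr, div_div, ← Real.sqrt_mul hγ0.le]
    congr 2
    ring
  have hsub : (⋂ n ∈ (Finset.univ : Finset I), β (n : ℤ) ⁻¹' Set.Icc (v n - r) (v n + r)) ⊆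
      {ω | ∑ n ∈ I, (η + 4 * π ^ 2 * (n : ℝ) ^ 2) ^ (-(2 * ν)) * |v n - β n ω| ^ 2 ≤ x ^ 2} := by
    intro ω hω
    simp only [Set.mem_iInter, Finset.mem_univ, forall_true_left, Set.mem_preimage] at hω
    calc _ ≤ ∑ n ∈ I, (η + 4 * π ^ 2 * (n : ℝ) ^ 2) ^ (-(2 * ν)) * r ^ 2 := by
          apply Finset.sum_le_sum
          intro n hn
          have h := hω ⟨n, hn⟩
          apply mul_le_mul_of_nonneg_left _ (hw n).le
          rw [sq_abs]
          apply sq_le_sq'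
          · linarith [h.2]
          · linarith [h.1]
      _ = x ^ 2 := by
          rw [← Finset.sum_mul, ← hγ, hr2]
          field_simp
  refine le_trans ?_ (measure_mono hsub)
  rw [hβindep.measure_inter_preimage_eq_mul Finset.univ (fun _ _ => measurableSet_Icc)]
  have hprod : ∏ n ∈ I, ENNReal.ofReal
      (r / √(2 * π * T) * Real.exp (-(N / T) * (v n ^ 2 + r ^ 2))) ≤
      ∏ n ∈ (Finset.univ : Finset I), P (β (n : ℤ) ⁻¹' Set.Icc (v n - r) (v n + r)) := by
    rw [← Finset.prod_coe_sort]
    apply Finset.prod_le_prod'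
    intro n _
    rw [← Measure.map_apply (hβmeas n) measurableSet_Icc, hβlaw n n.2]
    exact gauss_interval_aux T r (v n) hT hr0 N hN
  refine le_trans ?_ hprod
  rw [← ENNReal.ofReal_prod_of_nonneg (fun _ _ => by positivity)]
  apply ENNReal.ofReal_le_ofReal
  rw [Finset.prod_mul_distrib, Finset.prod_const, hcard, hbase, ← Real.exp_sum]
  apply mul_le_mul_of_nonneg_left _ (by positivity)
  apply Real.exp_le_exp.mpr
  rw [← Finset.mul_sum, Finset.sum_add_distrib, Finset.sum_const, hcard, ← hr2, nsmul_eq_mul]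
  push_cast
  have hS : 0 ≤ ∑ n ∈ I, v n ^ 2 := Finset.sum_nonneg fun _ _ => sq_nonneg _
  generalize ∑ n ∈ I, v n ^ 2 = S at hS
  have h3 : (N : ℝ) * (S + (2 * N + 1) * r ^ 2) ≤ 3 * (N : ℝ) ^ 2 * (S + r ^ 2) := by
    have ha : (N : ℝ) ≤ 3 * (N : ℝ) ^ 2 := by nlinarith
    have hb : (N : ℝ) * (2 * N + 1) ≤ 3 * (N : ℝ) ^ 2 := by nlinarith
    nlinarith [mul_le_mul_of_nonneg_right ha hS, mul_le_mul_of_nonneg_right hb (sq_nonneg r)]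
  have h4 := div_le_div_of_nonneg_right h3 hT.le
  have e1 : -(3 * (N : ℝ) ^ 2 / T) * (S + r ^ 2) = -(3 * (N : ℝ) ^ 2 * (S + r ^ 2) / T) := by ring
  have e2 : -((N : ℝ) / T) * (S + (2 * N + 1) * r ^ 2)
      = -((N : ℝ) * (S + (2 * N + 1) * r ^ 2) / T) := by ring
  rw [e1, e2]
  linarith
end

section
/- Let λ be the Lebesgue measure on (0,1), let q ∈ {2,3,...}, let v ∈ L^{2q}(λ;ℝ), let a = ∫_{(0,1)} v dλ, and let ε ∈ [0,∞) satisfy ‖v − a‖_{L^{2q}(λ;ℝ)} ≤ ε·|a| (where v − a denotes the function x ↦ v(x) − a). Then the pointwise power v^q is λ-integrable and ∫_{(0,1)} v^q dλ ≥ (2 − (1+ε)^q)·|a|^q in the sense that |∫_{(0,1)} v^q dλ| ≥ (2 − (1+ε)^q)·|a|^q whenever 2 − (1+ε)^q ≥ 0, and in general ∫_{(0,1)} |v^q| is finite and |∫_{(0,1)} v^q dλ| ≥ [2 − (1+ε)^q]·|a|^q holds with the convention that the right-hand side may be negative. -/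
open MeasureTheory
open scoped ENNReal

theorem moment_bound_aux (μ : Measure ℝ) [IsProbabilityMeasure μ] (w : ℝ → ℝ) (N m : ℕ)
    (hm : m ≠ 0) (hmN : m ≤ N) (hw : MemLp w (N : ℝ≥0∞) μ) (c : ℝ) (hc : 0 ≤ c)
    (hb : eLpNorm w (N : ℝ≥0∞) μ ≤ ENNReal.ofReal c) :
    |∫ x, w x ^ m ∂μ| ≤ c ^ m := by
  have hle : (m : ℝ≥0∞) ≤ (N : ℝ≥0∞) := by exact_mod_cast hmN
  have hwm : MemLp w (m : ℝ≥0∞) μ := hw.mono_exponent hle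
  have h1 : eLpNorm w (m : ℝ≥0∞) μ ≤ ENNReal.ofReal c :=
    (eLpNorm_le_eLpNorm_of_exponent_le hle hw.1).trans hb
  rw [hwm.eLpNorm_eq_integral_rpow_norm (by exact_mod_cast hm) (ENNReal.natCast_ne_top m),
    ENNReal.ofReal_le_ofReal_iff hc] at h1
  simp only [ENNReal.toReal_natCast, Real.rpow_natCast] at h1
  have h0 : 0 ≤ ∫ x, ‖w x‖ ^ m ∂μ := integral_nonneg fun x => by positivity
  calc |∫ x, w x ^ m ∂μ| ≤ ∫ x, ‖w x ^ m‖ ∂μ := by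
        rw [← Real.norm_eq_abs]; exact norm_integral_le_integral_norm _
    _ = ∫ x, ‖w x‖ ^ m ∂μ := by simp only [norm_pow]
    _ = ((∫ x, ‖w x‖ ^ m ∂μ) ^ ((m : ℝ)⁻¹)) ^ m := (Real.rpow_inv_natCast_pow h0 hm).symm
    _ ≤ c ^ m := by gcongr

theorem pow_integrable_aux (μ : Measure ℝ) [IsProbabilityMeasure μ] (w : ℝ → ℝ) (N m : ℕ)
    (hmN : m ≤ N) (hw : MemLp w (N : ℝ≥0∞) μ) : Integrable (fun x => w x ^ m) μ := by
  have hle : (m : ℝ≥0∞) ≤ (N : ℝ≥0∞) := by exact_mod_cast hmN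
  have h := (hw.mono_exponent hle).integrable_norm_pow'
  refine h.mono' (hw.1.pow m) (Filter.Eventually.of_forall fun x => ?_)
  simp

/-- Key nonlinearity estimate: if `v ∈ L^{2q}((0,1))` has mean `a` and the fluctuation `v − a`
satisfies `‖v − a‖_{L^{2q}} ≤ ε·|a|`, then `v^q` is integrable and
`|∫ v^q| ≥ (2 − (1+ε)^q)·|a|^q`. -/
theorem mean_power_lower_bound
    (q : ℕ) (hq : 2 ≤ q) (v : ℝ → ℝ)
    (hv : MemLp v ((2 * q : ℕ) : ℝ≥0∞) (volume.restrict (Set.Ioo (0 : ℝ) 1)))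
    (a : ℝ) (ha : a = ∫ x in Set.Ioo (0 : ℝ) 1, v x)
    (ε : ℝ) (hε : 0 ≤ ε)
    (hbound : eLpNorm (fun x => v x - a) ((2 * q : ℕ) : ℝ≥0∞)
        (volume.restrict (Set.Ioo (0 : ℝ) 1)) ≤ ENNReal.ofReal (ε * |a|)) :
    Integrable (fun x => (v x) ^ q) (volume.restrict (Set.Ioo (0 : ℝ) 1)) ∧
      (2 - (1 + ε) ^ q) * |a| ^ q ≤ |∫ x in Set.Ioo (0 : ℝ) 1, (v x) ^ q| := by
  clear ha
  have hP : IsProbabilityMeasure (volume.restrict (Set.Ioo (0 : ℝ) 1)) := ⟨by simp⟩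
  generalize volume.restrict (Set.Ioo (0 : ℝ) 1) = μ at *
  refine ⟨pow_integrable_aux μ v (2 * q) q (by omega) hv, ?_⟩
  have hw : MemLp (fun x => v x - a) ((2 * q : ℕ) : ℝ≥0∞) μ := hv.sub (memLp_const a)
  have hc : 0 ≤ ε * |a| := by positivity
  have hexp : ∫ x, v x ^ q ∂μ =
      ∑ m ∈ Finset.range (q + 1), (∫ x, (v x - a) ^ m ∂μ) * a ^ (q - m) * (q.choose m : ℝ) := by
    have : ∀ x, v x ^ q =
        ∑ m ∈ Finset.range (q + 1), (v x - a) ^ m * a ^ (q - m) * (q.choose m : ℝ) := by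
      intro x
      rw [← add_pow, sub_add_cancel]
    simp_rw [this]
    rw [integral_finsetSum]
    · simp_rw [integral_mul_const]
    · intro m hm
      have := Finset.mem_range.1 hm
      exact ((pow_integrable_aux μ _ (2 * q) m (by omega) hw).mul_const _).mul_const _
  have hsum : (1 + ε) ^ q * |a| ^ q =
      ∑ m ∈ Finset.range (q + 1), (ε * |a|) ^ m * |a| ^ (q - m) * (q.choose m : ℝ) := by
    rw [← add_pow, ← mul_pow]
    ring
  rw [Finset.sum_range_succ'] at hexp hsum
  simp only [pow_zero, integral_const, probReal_univ, smul_eq_mul, mul_one, one_mul, Nat.sub_zero,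
    Nat.choose_zero_right, Nat.cast_one] at hexp hsum
  set S := ∑ m ∈ Finset.range q,
    (∫ x, (v x - a) ^ (m + 1) ∂μ) * a ^ (q - (m + 1)) * (q.choose (m + 1) : ℝ) with hS
  have hSle : |S| ≤ ∑ m ∈ Finset.range q,
      (ε * |a|) ^ (m + 1) * |a| ^ (q - (m + 1)) * (q.choose (m + 1) : ℝ) := by
    refine (Finset.abs_sum_le_sum_abs _ _).trans (Finset.sum_le_sum fun m hm => ?_)
    have := Finset.mem_range.1 hm
    rw [abs_mul, abs_mul, abs_pow, Nat.abs_cast]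
    gcongr
    exact moment_bound_aux μ _ (2 * q) (m + 1) (by omega) (by omega) hw _ hc hbound
  have htri : |a| ^ q ≤ |∫ x, v x ^ q ∂μ| + |S| := by
    rw [← abs_pow]
    have h : a ^ q = (∫ x, v x ^ q ∂μ) - S := by rw [hexp]; ring
    rw [h]
    exact abs_sub _ _
  linarith
end

section
/- Let λ be the Lebesgue measure on (0,1), let H = L²(λ;ℝ), and let e_n ∈ H, n ∈ ℤ, be given by e_0(x) = 1, e_n(x) = √2·cos(2nπx) and e_{−n}(x) = √2·sin(2nπx) for n ∈ ℕ. For N ∈ ℕ let P_N : H → H be defined by P_N v = Σ_{n=−N}^{N} ⟨e_n, v⟩_H · e_n. Let T ∈ (0,∞), q ∈ {2,3,...}, a_0, a_1, ..., a_{q−1} ∈ ℝ, a_q ∈ ℝ∖{0}, χ ∈ (1/4,∞), and let ξ ∈ H satisfy Σ_{n∈ℤ} (1 + 4π²n²)^{2χ} · ⟨e_n, ξ⟩_H² < ∞. For each N ∈ ℕ let S_N : P_N H → P_N H be either the multiplier operator S_N e_n = exp(−4π²n²T/N)·e_n for all n ∈ {−N,...,N} (the exponential Euler case S_N = e^{(T/N)A}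 with A the periodic Laplacian) or the multiplier operator S_N e_n = (1 + 4π²n²T/N)^{−1}·e_n for all n ∈ {−N,...,N} (the linear-implicit Euler case S_N = (I − (T/N)A)^{−1}). Let (Ω,𝓕,P) be a probability space and, for each N ∈ ℕ, let (β^{j,N}_n)_{j ∈ {−N,...,N}, n ∈ {1,...,N}} be mutually independent centered Gaussian random variables each with variance T/N. Let Y^N : {0,1,...,N}×Ω → P_N H, N ∈ ℕ, be the stochastic processes satisfying Y^N_0 = P_N ξ and, for all n ∈ {0,1,...,N−1}, Y^N_{n+1} = P_N S_N( Y^N_n + (T/N)·Σ_{k=0}^{q} a_k·[Y^N_n]^k + Σ_{j=−N}^{N} β^{j,N}_{n+1}·e_j ), where [v]^k denotes the pointwise k-th power of the function v. Then for every p ∈ (0,∞) it holds that liminf_{N→∞} E[ ‖Y^N_N‖_H^p ] = ∞. -/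
open MeasureTheory ProbabilityTheory Real
open scoped ENNReal

/-- The orthonormal trigonometric basis `e_n` of `L²((0,1);ℝ)`:
`e_0 = 1`, `e_n(x) = √2·cos(2nπx)` and `e_{−n}(x) = √2·sin(2nπx)` for `n ≥ 1`. -/
noncomputable def trigBasisFun (n : ℤ) : ℝ → ℝ := fun x =>
  if n = 0 then 1
  else if 0 < n then Real.sqrt 2 * Real.cos (2 * n * π * x)
  else Real.sqrt 2 * Real.sin (2 * (-n) * π * x)

/-- The `n`-th Fourier coefficient `⟨e_n, v⟩` of `v` with respect to the trigonometric basis. -/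
noncomputable def fourierCoef (v : ℝ → ℝ) (n : ℤ) : ℝ :=
  ∫ x in Set.Ioo (0 : ℝ) 1, trigBasisFun n x * v x

lemma trig_abs_le (j : ℤ) (x : ℝ) : |trigBasisFun j x| ≤ 2 := by
  have h2 : Real.sqrt 2 ≤ 2 := by
    rw [Real.sqrt_le_left (by norm_num)]; norm_num
  unfold trigBasisFun
  split_ifs
  · norm_num
  · rw [abs_mul, abs_of_nonneg (Real.sqrt_nonneg 2)]
    nlinarith [Real.abs_cos_le_one (2 * j * π * x), Real.sqrt_nonneg 2, abs_nonneg (Real.cos (2 * j * π * x))]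
  · rw [abs_mul, abs_of_nonneg (Real.sqrt_nonneg 2)]
    nlinarith [Real.abs_sin_le_one (2 * (-j) * π * x), Real.sqrt_nonneg 2, abs_nonneg (Real.sin (2 * (-j) * π * x))]

lemma trig_zero : trigBasisFun 0 = fun _ => 1 := by
  funext x; simp [trigBasisFun]

lemma trig_cont (j : ℤ) : Continuous (trigBasisFun j) := by
  unfold trigBasisFun
  split_ifs <;> fun_prop

lemma int_cos (k : ℤ) : ∫ x in (0:ℝ)..1, Real.cos (2 * π * k * x) = if k = 0 then 1 else 0 := by
  split_ifs with h
  · simp [h]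
  · have hk : (2 * π * k : ℝ) ≠ 0 := by
      have : (k : ℝ) ≠ 0 := by exact_mod_cast h
      positivity
    rw [intervalIntegral.integral_comp_mul_left (fun x => Real.cos x) hk, integral_cos]
    have : Real.sin (2 * π * k * 1) = 0 := by
      rw [show (2 * π * k * 1 : ℝ) = ((2 * k : ℤ) : ℝ) * π by push_cast; ring]
      exact Real.sin_int_mul_pi _
    rw [this]; simp

lemma int_sin (k : ℤ) : ∫ x in (0:ℝ)..1, Real.sin (2 * π * k * x) = 0 := by
  by_cases h : k = 0
  · simp [h]
  · have hk : (2 * π * k : ℝ) ≠ 0 := by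
      have : (k : ℝ) ≠ 0 := by exact_mod_cast h
      positivity
    rw [intervalIntegral.integral_comp_mul_left (fun x => Real.sin x) hk, integral_sin]
    have : Real.cos (2 * π * k * 1) = 1 := by
      rw [show (2 * π * k * 1 : ℝ) = (k : ℝ) * (2 * π) by ring]
      exact Real.cos_int_mul_two_pi k
    rw [this]; simp

lemma ioo_eq (f : ℝ → ℝ) : ∫ x in Set.Ioo (0:ℝ) 1, f x = ∫ x in (0:ℝ)..1, f x := by
  rw [intervalIntegral.integral_of_le zero_le_one, integral_Ioc_eq_integral_Ioo]

lemma int_comb_cos (k l : ℤ) (u v : ℝ) :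
    ∫ x in (0:ℝ)..1, (u * Real.cos (2 * π * k * x) + v * Real.cos (2 * π * l * x))
      = u * (if k = 0 then 1 else 0) + v * (if l = 0 then 1 else 0) := by
  rw [intervalIntegral.integral_add, intervalIntegral.integral_const_mul,
    intervalIntegral.integral_const_mul, int_cos, int_cos]
  all_goals exact Continuous.intervalIntegrable (by fun_prop) _ _

lemma int_comb_sin (k l : ℤ) (u v : ℝ) :
    ∫ x in (0:ℝ)..1, (u * Real.sin (2 * π * k * x) + v * Real.sin (2 * π * l * x)) = 0 := by
  rw [intervalIntegral.integral_add, intervalIntegral.integral_const_mul,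
    intervalIntegral.integral_const_mul, int_sin, int_sin]
  · simp
  all_goals exact Continuous.intervalIntegrable (by fun_prop) _ _

lemma trig_orth (i j : ℤ) : fourierCoef (trigBasisFun i) j = if i = j then 1 else 0 := by
  unfold fourierCoef
  rw [ioo_eq]
  have hs : Real.sqrt 2 * Real.sqrt 2 = 2 := Real.mul_self_sqrt (by norm_num)
  rcases lt_trichotomy i 0 with hi | hi | hi <;> rcases lt_trichotomy j 0 with hj | hj | hj
  · have : ∀ x, trigBasisFun j x * trigBasisFun i x =
        1 * Real.cos (2 * π * ((j - i : ℤ)) * x) + (-1) * Real.cos (2 * π * ((j + i : ℤ)) * x) := by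
      intro x
      simp only [trigBasisFun, hi.ne, hj.ne, not_lt.2 hi.le, not_lt.2 hj.le, if_false]
      rw [show (2 * π * ((j - i : ℤ)) * x : ℝ) = 2 * (-i) * π * x - 2 * (-j) * π * x by push_cast; ring,
        show (2 * π * ((j + i : ℤ)) * x : ℝ) = -(2 * (-i) * π * x + 2 * (-j) * π * x) by push_cast; ring,
        Real.cos_neg, Real.cos_sub, Real.cos_add]
      linear_combination (Real.sin (2 * (-j) * π * x) * Real.sin (2 * (-i) * π * x)) * hs
    simp_rw [this]
    rw [int_comb_cos]
    have h1 : j - i = 0 ↔ i = j := by omega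
    have h2 : ¬ (j + i = 0) := by omega
    simp [h1, h2]
  · subst hj
    have : ∀ x, trigBasisFun 0 x * trigBasisFun i x =
        (Real.sqrt 2) * Real.sin (2 * π * ((-i : ℤ)) * x) + 0 * Real.sin (2 * π * ((i : ℤ)) * x) := by
      intro x
      simp only [trigBasisFun, hi.ne, not_lt.2 hi.le, if_false]
      rw [show (2 * π * ((-i : ℤ)) * x : ℝ) = 2 * (-i) * π * x by push_cast; ring]
      simp
    simp_rw [this]
    rw [int_comb_sin]
    simp [hi.ne]
  · have : ∀ x, trigBasisFun j x * trigBasisFun i x =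
        1 * Real.sin (2 * π * ((-i + j : ℤ)) * x) + 1 * Real.sin (2 * π * ((-i - j : ℤ)) * x) := by
      intro x
      simp only [trigBasisFun, hi.ne, hj.ne', hj, not_lt.2 hi.le, if_false, if_true]
      rw [show (2 * π * ((-i - j : ℤ)) * x : ℝ) = 2 * (-i) * π * x - 2 * (j) * π * x by push_cast; ring,
        show (2 * π * ((-i + j : ℤ)) * x : ℝ) = (2 * (-i) * π * x + 2 * (j) * π * x) by push_cast; ring,
        Real.sin_sub, Real.sin_add]
      linear_combination (Real.cos (2 * (j) * π * x) * Real.sin (2 * (-i) * π * x)) * hs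
    simp_rw [this]
    rw [int_comb_sin]
    have h1 : ¬ i = j := by omega
    simp [h1]
  · subst hi
    have : ∀ x, trigBasisFun j x * trigBasisFun 0 x =
        (Real.sqrt 2) * Real.sin (2 * π * ((-j : ℤ)) * x) + 0 * Real.sin (2 * π * ((j : ℤ)) * x) := by
      intro x
      simp only [trigBasisFun, hj.ne, not_lt.2 hj.le, if_false]
      rw [show (2 * π * ((-j : ℤ)) * x : ℝ) = 2 * (-j) * π * x by push_cast; ring]
      simp
    simp_rw [this]
    rw [int_comb_sin]
    simp [hj.ne']
  · subst hi; subst hj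
    simp [trigBasisFun]
  · subst hi
    have : ∀ x, trigBasisFun j x * trigBasisFun 0 x =
        (Real.sqrt 2) * Real.cos (2 * π * ((j : ℤ)) * x) + 0 * Real.cos (2 * π * ((j : ℤ)) * x) := by
      intro x
      simp only [trigBasisFun, hj.ne', hj, if_false, if_true]
      rw [show (2 * π * ((j : ℤ)) * x : ℝ) = 2 * (j) * π * x by push_cast; ring]
      simp
    simp_rw [this]
    rw [int_comb_cos]
    simp [hj.ne, hj.ne']
  · have : ∀ x, trigBasisFun j x * trigBasisFun i x =
        1 * Real.sin (2 * π * ((-j + i : ℤ)) * x) + 1 * Real.sin (2 * π * ((-j - i : ℤ)) * x) := by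
      intro x
      simp only [trigBasisFun, hj.ne, hi.ne', hi, not_lt.2 hj.le, if_false, if_true]
      rw [show (2 * π * ((-j - i : ℤ)) * x : ℝ) = 2 * (-j) * π * x - 2 * (i) * π * x by push_cast; ring,
        show (2 * π * ((-j + i : ℤ)) * x : ℝ) = (2 * (-j) * π * x + 2 * (i) * π * x) by push_cast; ring,
        Real.sin_sub, Real.sin_add]
      linear_combination (Real.cos (2 * (i) * π * x) * Real.sin (2 * (-j) * π * x)) * hs
    simp_rw [this]
    rw [int_comb_sin]
    have h1 : ¬ i = j := by omega
    simp [h1]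
  · subst hj
    have : ∀ x, trigBasisFun 0 x * trigBasisFun i x =
        (Real.sqrt 2) * Real.cos (2 * π * ((i : ℤ)) * x) + 0 * Real.cos (2 * π * ((i : ℤ)) * x) := by
      intro x
      simp only [trigBasisFun, hi.ne', hi, if_false, if_true]
      rw [show (2 * π * ((i : ℤ)) * x : ℝ) = 2 * (i) * π * x by push_cast; ring]
      simp
    simp_rw [this]
    rw [int_comb_cos]
    simp [hi.ne']
  · have : ∀ x, trigBasisFun j x * trigBasisFun i x =
        1 * Real.cos (2 * π * ((j - i : ℤ)) * x) + 1 * Real.cos (2 * π * ((j + i : ℤ)) * x) := by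
      intro x
      simp only [trigBasisFun, hi.ne', hj.ne', hi, hj, if_false, if_true]
      rw [show (2 * π * ((j - i : ℤ)) * x : ℝ) = 2 * (j) * π * x - 2 * (i) * π * x by push_cast; ring,
        show (2 * π * ((j + i : ℤ)) * x : ℝ) = (2 * (j) * π * x + 2 * (i) * π * x) by push_cast; ring,
        Real.cos_sub, Real.cos_add]
      linear_combination (Real.cos (2 * (j) * π * x) * Real.cos (2 * (i) * π * x)) * hs
    simp_rw [this]
    rw [int_comb_cos]
    have h1 : j - i = 0 ↔ i = j := by omega
    have h2 : ¬ (j + i = 0) := by omega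
    simp [h1, h2]

lemma fc_integrable {v : ℝ → ℝ} (hv : Continuous v) (j : ℤ) :
    IntegrableOn (fun x => trigBasisFun j x * v x) (Set.Ioo (0:ℝ) 1) := by
  have : Continuous (fun x => trigBasisFun j x * v x) := (trig_cont j).mul hv
  exact (this.integrableOn_Icc (a := 0) (b := 1)).mono_set Set.Ioo_subset_Icc_self

lemma fc_add {u v : ℝ → ℝ} (hu : Continuous u) (hv : Continuous v) (j : ℤ) :
    fourierCoef (fun x => u x + v x) j = fourierCoef u j + fourierCoef v j := by
  unfold fourierCoef
  rw [← integral_add (fc_integrable hu j) (fc_integrable hv j)]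
  congr 1; funext x; ring

lemma fc_smul (c : ℝ) (v : ℝ → ℝ) (j : ℤ) :
    fourierCoef (fun x => c * v x) j = c * fourierCoef v j := by
  unfold fourierCoef
  rw [← integral_const_mul]
  congr 1; funext x; ring

lemma fc_sum (S : Finset ℤ) (c : ℤ → ℝ) (j : ℤ) (hj : j ∈ S) :
    fourierCoef (fun x => ∑ i ∈ S, c i * trigBasisFun i x) j = c j := by
  have : fourierCoef (fun x => ∑ i ∈ S, c i * trigBasisFun i x) j =
      ∑ i ∈ S, c i * fourierCoef (trigBasisFun i) j := by
    unfold fourierCoef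
    simp_rw [Finset.mul_sum]
    rw [integral_finsetSum]
    · refine Finset.sum_congr rfl fun i _ => ?_
      rw [← integral_const_mul]
      congr 1; funext x; ring
    · intro i _
      exact fc_integrable (v := fun x => c i * trigBasisFun i x) ((trig_cont i).const_mul _ |>.congr fun _ => rfl) j
  rw [this]
  simp_rw [trig_orth]
  simp [hj]

lemma fc_bound {v : ℝ → ℝ} {C : ℝ} (hv : ∀ x, |v x| ≤ C) (j : ℤ) :
    |fourierCoef v j| ≤ 2 * C := by
  unfold fourierCoef
  have := norm_setIntegral_le_of_norm_le_const (μ := volume) (s := Set.Ioo (0:ℝ) 1)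
    (f := fun x => trigBasisFun j x * v x) (C := 2 * C) (by simp) (fun x _ => by
      rw [Real.norm_eq_abs, abs_mul]
      exact mul_le_mul (trig_abs_le j x) (hv x) (abs_nonneg _) (by norm_num))
  simpa [Measure.real] using this

lemma fc_const (c : ℝ) (j : ℤ) : fourierCoef (fun _ => c) j = if j = 0 then c else 0 := by
  have h := fc_smul c (trigBasisFun 0) j
  rw [trig_orth, trig_zero] at h
  simp only [mul_one] at h
  rw [h]
  by_cases hj : j = 0
  · simp [hj]
  · simp [hj, Ne.symm hj]

lemma tsum_cont (S : Finset ℤ) (c : ℤ → ℝ) :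
    Continuous (fun x => ∑ i ∈ S, c i * trigBasisFun i x) :=
  continuous_finsetSum _ fun i _ => continuous_const.mul (trig_cont i)

lemma poly_lip (q : ℕ) (a : ℕ → ℝ) (m x : ℝ) (hm : 1 ≤ |m|) (hx : |x - m| ≤ |m|) :
    |∑ k ∈ Finset.range (q + 1), a k * x ^ k - ∑ k ∈ Finset.range (q + 1), a k * m ^ k|
      ≤ (∑ k ∈ Finset.range (q + 1), |a k| * (k * 2 ^ k) + 1) * |m| ^ (q - 1) * |x - m| := by
  rw [← Finset.sum_sub_distrib]
  refine (Finset.abs_sum_le_sum_abs _ _).trans ?_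
  have hx2 : |x| ≤ 2 * |m| := by
    have := abs_sub_abs_le_abs_sub x m
    linarith
  have key : ∀ k ∈ Finset.range (q + 1), |a k * x ^ k - a k * m ^ k| ≤
      (|a k| * (k * 2 ^ k)) * (|m| ^ (q - 1) * |x - m|) := by
    intro k hk
    rw [← mul_sub, abs_mul, mul_assoc]
    refine mul_le_mul_of_nonneg_left ?_ (abs_nonneg _)
    rcases Nat.eq_zero_or_pos k with h0 | h0
    · subst h0; simp
    have h1 := abs_pow_sub_pow_le x m k
    have h2 : max |x| |m| ≤ 2 * |m| := max_le hx2 (by linarith)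
    have h3 : max |x| |m| ^ (k - 1) ≤ 2 ^ k * |m| ^ (q - 1) := by
      calc max |x| |m| ^ (k - 1) ≤ (2 * |m|) ^ (k - 1) := by gcongr
        _ = 2 ^ (k - 1) * |m| ^ (k - 1) := mul_pow _ _ _
        _ ≤ 2 ^ k * |m| ^ (q - 1) := by
          have hkq : k ≤ q := by simpa [Nat.lt_succ_iff] using hk
          gcongr
          · norm_num
          · omega
    calc |x ^ k - m ^ k| ≤ |x - m| * k * max |x| |m| ^ (k - 1) := h1
      _ ≤ |x - m| * k * (2 ^ k * |m| ^ (q - 1)) := by gcongr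
      _ = _ := by ring
  refine (Finset.sum_le_sum key).trans ?_
  rw [← Finset.sum_mul]
  have : 0 ≤ |m| ^ (q - 1) * |x - m| := by positivity
  linarith

lemma poly_lower (q : ℕ) (a : ℕ → ℝ) (m : ℝ) (hm : 1 ≤ |m|) :
    |a q| * |m| ^ q - (∑ k ∈ Finset.range q, |a k|) * |m| ^ (q - 1)
      ≤ |∑ k ∈ Finset.range (q + 1), a k * m ^ k| := by
  rw [Finset.sum_range_succ]
  have h1 : |∑ k ∈ Finset.range q, a k * m ^ k| ≤ (∑ k ∈ Finset.range q, |a k|) * |m| ^ (q - 1) := by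
    refine (Finset.abs_sum_le_sum_abs _ _).trans ?_
    rw [Finset.sum_mul]
    refine Finset.sum_le_sum fun k hk => ?_
    rw [abs_mul, abs_pow]
    have : k < q := by simpa using hk
    gcongr
    omega
  have h2 : |a q * m ^ q| = |a q| * |m| ^ q := by rw [abs_mul, abs_pow]
  have h3 := abs_sub_abs_le_abs_sub (a q * m ^ q) (-(∑ k ∈ Finset.range q, a k * m ^ k))
  rw [abs_neg, sub_neg_eq_add, add_comm (a q * m ^ q)] at h3
  linarith

lemma dev_bound (N : ℕ) (c : ℤ → ℝ) (D : ℝ)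
    (hc : ∀ j ∈ Finset.Icc (-(N:ℤ)) N, j ≠ 0 → |c j| ≤ D) (x : ℝ) :
    |∑ j ∈ Finset.Icc (-(N:ℤ)) N, c j * trigBasisFun j x - c 0| ≤ 4 * N * D := by
  have h0 : (0:ℤ) ∈ Finset.Icc (-(N:ℤ)) N := by simp
  rw [← Finset.add_sum_erase _ _ h0, trig_zero]
  simp only [mul_one, add_sub_cancel_left]
  refine (Finset.abs_sum_le_sum_abs _ _).trans ?_
  have : ∀ j ∈ (Finset.Icc (-(N:ℤ)) N).erase 0, |c j * trigBasisFun j x| ≤ D * 2 := by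
    intro j hj
    rw [Finset.mem_erase] at hj
    rw [abs_mul]
    have h1 := hc j hj.2 hj.1
    exact mul_le_mul h1 (trig_abs_le j x) (abs_nonneg _) ((abs_nonneg _).trans h1)
  refine (Finset.sum_le_card_nsmul _ _ _ this).trans ?_
  rw [Finset.card_erase_of_mem h0, Int.card_Icc]
  have : ((N:ℤ) + 1 - -(N:ℤ)).toNat - 1 = 2 * N := by omega
  rw [this, nsmul_eq_mul]
  push_cast
  linarith

lemma coef_eq (N q : ℕ) (a : ℕ → ℝ) (h : ℝ) (c b : ℤ → ℝ) (y : ℝ → ℝ)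
    (hy : y = fun x => ∑ j ∈ Finset.Icc (-(N:ℤ)) N, c j * trigBasisFun j x)
    (j : ℤ) (hj : j ∈ Finset.Icc (-(N:ℤ)) N) :
    fourierCoef (fun x => y x + h * ∑ k ∈ Finset.range (q + 1), a k * (y x) ^ k +
              ∑ i ∈ Finset.Icc (-(N : ℤ)) (N : ℤ), b i * trigBasisFun i x) j
      = c j + h * fourierCoef (fun x => ∑ k ∈ Finset.range (q + 1), a k * (y x) ^ k) j + b j := by
  have hyc : Continuous y := by rw [hy]; exact tsum_cont _ _
  have hF : Continuous (fun x => ∑ k ∈ Finset.range (q + 1), a k * (y x) ^ k) := by fun_prop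
  rw [fc_add (u := fun x => y x + h * ∑ k ∈ Finset.range (q + 1), a k * (y x) ^ k) (by fun_prop)
    (tsum_cont _ _), fc_add (v := fun x => h * ∑ k ∈ Finset.range (q + 1), a k * (y x) ^ k)
    hyc (by fun_prop), fc_smul, fc_sum _ b _ hj]
  congr 2
  rw [hy, fc_sum _ c _ hj]

lemma coefF_bound (N q : ℕ) (a : ℕ → ℝ) (c : ℤ → ℝ) (y : ℝ → ℝ) (D : ℝ)
    (hy : y = fun x => ∑ j ∈ Finset.Icc (-(N:ℤ)) N, c j * trigBasisFun j x)
    (hc : ∀ j ∈ Finset.Icc (-(N:ℤ)) N, j ≠ 0 → |c j| ≤ D)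
    (hm : 1 ≤ |c 0|) (hD : 4 * N * D ≤ |c 0|) (j : ℤ) :
    |fourierCoef (fun x => ∑ k ∈ Finset.range (q + 1), a k * (y x) ^ k) j
      - (if j = 0 then ∑ k ∈ Finset.range (q + 1), a k * (c 0) ^ k else 0)|
      ≤ 2 * ((∑ k ∈ Finset.range (q + 1), |a k| * (k * 2 ^ k) + 1) * |c 0| ^ (q - 1) * (4 * N * D)) := by
  have hyc : Continuous y := by rw [hy]; exact tsum_cont _ _
  set L := ∑ k ∈ Finset.range (q + 1), |a k| * ((k:ℝ) * 2 ^ k) + 1 with hL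
  have hL0 : 0 ≤ L := by
    have : 0 ≤ ∑ k ∈ Finset.range (q + 1), |a k| * ((k:ℝ) * 2 ^ k) :=
      Finset.sum_nonneg fun k _ => by positivity
    linarith
  have hF : Continuous (fun x => ∑ k ∈ Finset.range (q + 1), a k * (y x) ^ k) := by fun_prop
  set Fm := ∑ k ∈ Finset.range (q + 1), a k * (c 0) ^ k with hFm
  have e : fourierCoef (fun x => ∑ k ∈ Finset.range (q + 1), a k * (y x) ^ k) j
      - (if j = 0 then Fm else 0) =
      fourierCoef (fun x => ∑ k ∈ Finset.range (q + 1), a k * (y x) ^ k + (-Fm)) j := by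
    rw [fc_add hF continuous_const, fc_const]
    split_ifs <;> ring
  rw [e]
  refine fc_bound (fun x => ?_) j
  have hd := dev_bound N c D hc x
  have hyx : y x = ∑ j ∈ Finset.Icc (-(N:ℤ)) N, c j * trigBasisFun j x := by rw [hy]
  rw [← hyx] at hd
  have := poly_lip q a (c 0) (y x) hm (hd.trans hD)
  rw [← sub_eq_add_neg]
  refine this.trans ?_
  gcongr

set_option maxHeartbeats 2000000 in
lemma step_lemma (N q : ℕ) (hN : 1 ≤ N) (hq : 2 ≤ q) (a : ℕ → ℝ) (T : ℝ) (hT : 0 < T)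
    (haq : a q ≠ 0) (c b σ : ℤ → ℝ) (y : ℝ → ℝ) (L A κ G δ η : ℝ)
    (hL : L = ∑ k ∈ Finset.range (q + 1), |a k| * ((k:ℝ) * 2 ^ k) + 1)
    (hA : A = ∑ k ∈ Finset.range q, |a k|)
    (hκ : κ = T * |a q| / (2 * N))
    (hG : 2 * (2 + 8 * T * L) / (T * |a q|) ≤ G)
    (hσ0 : σ 0 = 1) (hσ : ∀ j, |σ j| ≤ 1)
    (hy : y = fun x => ∑ j ∈ Finset.Icc (-(N:ℤ)) N, c j * trigBasisFun j x)
    (hδ : 0 < δ) (hδ1 : δ ≤ 1) (hδη : δ ≤ η)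
    (hη1 : 4 * N * η ≤ 1) (hη2 : 4 * N * η ≤ |a q| / (16 * L))
    (hb : ∀ j ∈ Finset.Icc (-(N:ℤ)) N, |b j| ≤ δ)
    (hc : ∀ j ∈ Finset.Icc (-(N:ℤ)) N, j ≠ 0 → |c j| ≤ η * |c 0|)
    (hm1 : 1 ≤ |c 0|) (hm2 : 4 ≤ κ * |c 0|) (hm3 : 8 * A ≤ |a q| * |c 0|)
    (c' : ℤ → ℝ)
    (hc' : ∀ j, c' j = σ j * fourierCoef (fun x => y x +
        (T / N) * ∑ k ∈ Finset.range (q + 1), a k * (y x) ^ k +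
              ∑ i ∈ Finset.Icc (-(N : ℤ)) (N : ℤ), b i * trigBasisFun i x) j) :
    κ * |c 0| ^ q ≤ |c' 0| ∧
    ∀ j ∈ Finset.Icc (-(N:ℤ)) N, j ≠ 0 → |c' j| ≤ (η * (N * G)) * |c' 0| := by
  have hN' : (1:ℝ) ≤ N := by exact_mod_cast hN
  have hN0 : (0:ℝ) < N := by linarith
  have haq' : 0 < |a q| := abs_pos.2 haq
  have hLpos : 0 < L := by
    have : 0 ≤ ∑ k ∈ Finset.range (q + 1), |a k| * ((k:ℝ) * 2 ^ k) :=
      Finset.sum_nonneg fun k _ => by positivity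
    linarith
  have hκ0 : 0 < κ := by rw [hκ]; positivity
  have hη0 : 0 < η := by linarith
  set m := |c 0| with hm
  have hm0 : 0 < m := by linarith
  have hD : 4 * N * (η * m) ≤ m := by nlinarith
  have hFb := coefF_bound N q a c y (η * m) hy hc hm1 hD
  rw [← hL, ← hm] at hFb
  have hmq : m ^ q = m ^ (q - 1) * m := by
    rw [← pow_succ]; congr 1; omega
  have hmq1 : m ≤ m ^ (q - 1) := by
    calc m = m ^ 1 := (pow_one m).symm
      _ ≤ m ^ (q - 1) := pow_le_pow_right₀ hm1 (by omega)
  set Q := m ^ (q - 1) with hQ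
  have hQ0 : 0 < Q := by positivity
  set h := T / (N:ℝ) with hh
  have hh0 : 0 < h := by positivity
  have hκh : h * |a q| = 2 * κ := by rw [hκ, hh]; field_simp
  have mem0 : (0:ℤ) ∈ Finset.Icc (-(N:ℤ)) N := by simp
  have part1 : κ * m ^ q ≤ |c' 0| := by
    rw [hc' 0, hσ0, one_mul, coef_eq N q a h c b y hy 0 mem0]
    have hf := hFb 0
    simp only [if_true] at hf
    set f0 := fourierCoef (fun x => ∑ k ∈ Finset.range (q + 1), a k * (y x) ^ k) 0
    have hlow := poly_lower q a (c 0) hm1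
    rw [← hm, ← hA, hmq] at hlow
    set Fm := ∑ k ∈ Finset.range (q + 1), a k * (c 0) ^ k
    have hb0 := hb 0 mem0
    have e1 : 2 * (L * Q * (4 * N * (η * m))) ≤ |a q| / 8 * (Q * m) := by
      have : L * (4 * N * η) ≤ |a q| / 16 := by
        calc L * (4 * N * η) ≤ L * (|a q| / (16 * L)) := by gcongr
          _ = |a q| / 16 := by field_simp
      have h2 : 0 < Q * m := by positivity
      nlinarith
    have e2 : A * Q ≤ |a q| / 8 * (Q * m) := by nlinarith
    have e3 : 3 / 4 * |a q| * (Q * m) ≤ |f0| := by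
      have := abs_sub_abs_le_abs_sub Fm f0
      rw [abs_sub_comm] at this
      linarith
    have e4 : 3 / 2 * κ * (Q * m) ≤ |h * f0| := by
      rw [abs_mul, abs_of_pos hh0]
      calc 3 / 2 * κ * (Q * m) = h * (3 / 4 * |a q| * (Q * m)) := by
            linear_combination (-(3/4) * (Q * m)) * hκh
        _ ≤ h * |f0| := by gcongr
    have e5 : 2 * m ≤ 1 / 2 * κ * (Q * m) := by
      have : 4 ≤ κ * Q := hm2.trans (by gcongr)
      nlinarith
    have e6 : |h * f0| ≤ |c 0 + h * f0 + b 0| + |c 0| + |b 0| := by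
      have : h * f0 = (c 0 + h * f0 + b 0) - c 0 - b 0 := by ring
      calc |h * f0| = |(c 0 + h * f0 + b 0) - c 0 - b 0| := by rw [← this]
        _ ≤ |(c 0 + h * f0 + b 0) - c 0| + |b 0| := abs_sub _ _
        _ ≤ _ := by gcongr; exact abs_sub _ _
    rw [← hm] at e6
    rw [hmq]
    linarith
  refine ⟨part1, fun j hj hj0 => ?_⟩
  have hf := hFb j
  simp only [hj0, if_false, sub_zero] at hf
  have hco := coef_eq N q a h c b y hy j hj
  rw [hc' j, hco, abs_mul]
  set fj := fourierCoef (fun x => ∑ k ∈ Finset.range (q + 1), a k * (y x) ^ k) j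
  have g1 : |σ j| * |c j + h * fj + b j| ≤ |c j| + h * |fj| + |b j| := by
    calc |σ j| * |c j + h * fj + b j| ≤ 1 * |c j + h * fj + b j| := by gcongr; exact hσ j
      _ = |c j + h * fj + b j| := one_mul _
      _ ≤ |c j| + |h * fj| + |b j| := abs_add_three _ _ _
      _ = _ := by rw [abs_mul, abs_of_pos hh0]
  have g2 : h * |fj| ≤ 8 * T * L * η * (Q * m) := by
    calc h * |fj| ≤ h * (2 * (L * Q * (4 * N * (η * m)))) := by gcongr
      _ = _ := by rw [hh]; field_simp; norm_num
  have g3 : |c j| ≤ η * (Q * m) := (hc j hj hj0).trans (by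
    have : 1 ≤ Q := hm1.trans hmq1
    gcongr; nlinarith)
  have g4 : |b j| ≤ η * (Q * m) := (hb j hj).trans (hδη.trans (by
    have : 1 ≤ Q := hm1.trans hmq1
    have : 1 ≤ Q * m := one_le_mul_of_one_le_of_one_le this hm1
    nlinarith))
  have g5 : 2 + 8 * T * L ≤ N * G * κ := by
    calc 2 + 8 * T * L = N * (2 * (2 + 8 * T * L) / (T * |a q|)) * κ := by
          rw [hκ]; field_simp
      _ ≤ N * G * κ := by gcongr
  have hG0 : 0 < G := lt_of_lt_of_le (by positivity) hG
  calc |σ j| * |c j + h * fj + b j| ≤ η * (2 + 8 * T * L) * (Q * m) := by nlinarith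
    _ ≤ η * (N * G * κ) * (Q * m) := by gcongr
    _ = (η * (N * G)) * (κ * m ^ q) := by rw [hmq]; ring
    _ ≤ _ := mul_le_mul_of_nonneg_left part1 (by positivity)

set_option maxHeartbeats 1000000 in
lemma chain_lemma (N q : ℕ) (hN : 1 ≤ N) (hq : 2 ≤ q) (a : ℕ → ℝ) (T : ℝ) (hT : 0 < T)
    (haq : a q ≠ 0) (c0 σ : ℤ → ℝ) (b : ℕ → ℤ → ℝ) (y : ℕ → ℝ → ℝ) (L A κ G δ M : ℝ)
    (hL : L = ∑ k ∈ Finset.range (q + 1), |a k| * ((k:ℝ) * 2 ^ k) + 1)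
    (hA : A = ∑ k ∈ Finset.range q, |a k|)
    (hκ : κ = T * |a q| / (2 * N))
    (hG : 2 * (2 + 8 * T * L) / (T * |a q|) ≤ G) (hG1 : 1 ≤ G)
    (hσ0 : σ 0 = 1) (hσ : ∀ j, |σ j| ≤ 1)
    (hy0 : y 0 = fun x => ∑ j ∈ Finset.Icc (-(N:ℤ)) N, c0 j * trigBasisFun j x)
    (hyrec : ∀ n < N, y (n + 1) = fun x => ∑ j ∈ Finset.Icc (-(N:ℤ)) N,
      σ j * fourierCoef (fun x => y n x +
        (T / N) * ∑ k ∈ Finset.range (q + 1), a k * (y n x) ^ k +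
              ∑ i ∈ Finset.Icc (-(N : ℤ)) (N : ℤ), b (n + 1) i * trigBasisFun i x) j * trigBasisFun j x)
    (hδ : 0 < δ)
    (hδ1 : 4 * N * (δ * (N * G) ^ N) ≤ 1 / 2)
    (hδ2 : 4 * N * (δ * (N * G) ^ N) ≤ |a q| / (16 * L))
    (hM1 : 1 ≤ M) (hM2 : 4 ≤ κ * M) (hM3 : 8 * A ≤ |a q| * M)
    (hb10 : |b 1 0 - (M + 1 - (c0 0 + (T / N) *
      fourierCoef (fun x => ∑ k ∈ Finset.range (q + 1), a k * (y 0 x) ^ k) 0))| ≤ δ)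
    (hb1 : ∀ j ∈ Finset.Icc (-(N:ℤ)) N, j ≠ 0 → |b 1 j - (0 - (c0 j + (T / N) *
      fourierCoef (fun x => ∑ k ∈ Finset.range (q + 1), a k * (y 0 x) ^ k) j))| ≤ δ)
    (hb : ∀ n, 2 ≤ n → n ≤ N → ∀ j ∈ Finset.Icc (-(N:ℤ)) N, |b n j| ≤ δ)
    (n : ℕ) (hn : 1 ≤ n) (hnN : n ≤ N) :
    ∃ c : ℤ → ℝ, (y n = fun x => ∑ j ∈ Finset.Icc (-(N:ℤ)) N, c j * trigBasisFun j x) ∧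
      M ≤ |c 0| ∧ 2 ^ (2 ^ n) ≤ κ * |c 0| ∧
      ∀ j ∈ Finset.Icc (-(N:ℤ)) N, j ≠ 0 → |c j| ≤ δ * (N * G) ^ n * |c 0| := by
  have hN' : (1:ℝ) ≤ N := by exact_mod_cast hN
  have hNG : 1 ≤ N * G := by nlinarith
  have haq' : 0 < |a q| := abs_pos.2 haq
  have hκ0 : 0 < κ := by rw [hκ]; positivity
  have hpow : ∀ n, n ≤ N → δ * (N * G) ^ n ≤ δ * (N * G) ^ N := fun n hn => by gcongr
  have hone : ∀ n : ℕ, 1 ≤ (N * G) ^ n := fun n => one_le_pow₀ hNG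
  have hδle : δ ≤ 1 / 2 := by
    have h1 : δ ≤ δ * (N * G) ^ N := le_mul_of_one_le_right hδ.le (hone N)
    nlinarith
  have mem0 : (0:ℤ) ∈ Finset.Icc (-(N:ℤ)) N := by simp
  induction n, hn using Nat.le_induction with
  | base =>
    refine ⟨_, hyrec 0 hN, ?_⟩
    have hco := coef_eq N q a (T / N) c0 (b 1) (y 0) hy0
    simp only [zero_add]
    have h0 : M ≤ |σ 0 * fourierCoef (fun x => y 0 x +
        (T / N) * ∑ k ∈ Finset.range (q + 1), a k * (y 0 x) ^ k +
              ∑ i ∈ Finset.Icc (-(N : ℤ)) (N : ℤ), b 1 i * trigBasisFun i x) 0| := by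
      rw [hco 0 mem0, hσ0, one_mul]
      have := (abs_le.1 hb10).1
      refine le_trans ?_ (le_abs_self _)
      linarith
    refine ⟨h0, ?_, fun j hj hj0 => ?_⟩
    · refine le_trans (le_trans ?_ hM2) (mul_le_mul_of_nonneg_left h0 hκ0.le)
      norm_num
    · have h1 : |σ j * fourierCoef (fun x => y 0 x +
        (T / N) * ∑ k ∈ Finset.range (q + 1), a k * (y 0 x) ^ k +
              ∑ i ∈ Finset.Icc (-(N : ℤ)) (N : ℤ), b 1 i * trigBasisFun i x) j| ≤ δ := by
        rw [hco j hj, abs_mul]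
        refine le_trans (mul_le_of_le_one_left (abs_nonneg _) (hσ j)) ?_
        have := hb1 j hj hj0
        rwa [zero_sub, sub_neg_eq_add, add_comm] at this
      refine h1.trans ?_
      rw [pow_one, mul_assoc]
      refine le_mul_of_one_le_right hδ.le ?_
      exact one_le_mul_of_one_le_of_one_le hNG (hM1.trans h0)
  | succ n hn ih =>
    obtain ⟨c, hc, hcM, hcg, hcb⟩ := ih (by omega)
    have hη := hpow n (by omega)
    have hη' : 4 * (N:ℝ) * (δ * (N * G) ^ n) ≤ 4 * N * (δ * (N * G) ^ N) := by gcongr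
    obtain ⟨s1, s2⟩ := step_lemma N q hN hq a T hT haq c (b (n+1)) σ (y n) L A κ G δ
      (δ * (N * G) ^ n) hL hA hκ hG hσ0 hσ hc hδ (by linarith)
      (le_mul_of_one_le_right hδ.le (hone n)) (by linarith) (by linarith)
      (hb (n+1) (by omega) hnN) hcb (hM1.trans hcM)
      (hM2.trans (mul_le_mul_of_nonneg_left hcM hκ0.le))
      (hM3.trans (mul_le_mul_of_nonneg_left hcM haq'.le)) _ (fun j => rfl)
    refine ⟨_, hyrec n (by omega), ?_⟩
    generalize hc' : (fun j => σ j * fourierCoef (fun x => y n x +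
        (T / N) * ∑ k ∈ Finset.range (q + 1), a k * (y n x) ^ k +
              ∑ i ∈ Finset.Icc (-(N : ℤ)) (N : ℤ), b (n+1) i * trigBasisFun i x) j) = c' at s1 s2
    have hcj : ∀ j, σ j * fourierCoef (fun x => y n x +
        (T / N) * ∑ k ∈ Finset.range (q + 1), a k * (y n x) ^ k +
              ∑ i ∈ Finset.Icc (-(N : ℤ)) (N : ℤ), b (n+1) i * trigBasisFun i x) j = c' j :=
      fun j => congrFun hc' j
    simp only [hcj] at s1 s2 ⊢
    have hm1 : 1 ≤ |c 0| := hM1.trans hcM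
    have hsq : κ * |c 0| ^ 2 ≤ |c' 0| := by
      refine le_trans ?_ s1
      gcongr
    have h4 : 4 ≤ κ * |c 0| := hM2.trans (mul_le_mul_of_nonneg_left hcM hκ0.le)
    refine ⟨?_, ?_, fun j hj hj0 => ?_⟩
    · nlinarith
    · calc (2:ℝ) ^ (2 ^ (n+1)) = (2 ^ (2 ^ n)) ^ 2 := by rw [← pow_mul, pow_succ]
        _ ≤ (κ * |c 0|) ^ 2 := by gcongr
        _ = κ * (κ * |c 0| ^ 2) := by ring
        _ ≤ κ * |c' 0| := by gcongr
    · refine (s2 j hj hj0).trans (le_of_eq ?_)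
      rw [pow_succ]; ring

lemma final_lower (N q : ℕ) (hN : 1 ≤ N) (hq : 2 ≤ q) (a : ℕ → ℝ) (T : ℝ) (hT : 0 < T)
    (haq : a q ≠ 0) (c0 σ : ℤ → ℝ) (b : ℕ → ℤ → ℝ) (y : ℕ → ℝ → ℝ) (L A κ G δ M : ℝ)
    (hL : L = ∑ k ∈ Finset.range (q + 1), |a k| * ((k:ℝ) * 2 ^ k) + 1)
    (hA : A = ∑ k ∈ Finset.range q, |a k|)
    (hκ : κ = T * |a q| / (2 * N)) (hκ2 : κ ≤ 1 / 2)
    (hG : 2 * (2 + 8 * T * L) / (T * |a q|) ≤ G) (hG1 : 1 ≤ G)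
    (hσ0 : σ 0 = 1) (hσ : ∀ j, |σ j| ≤ 1)
    (hy0 : y 0 = fun x => ∑ j ∈ Finset.Icc (-(N:ℤ)) N, c0 j * trigBasisFun j x)
    (hyrec : ∀ n < N, y (n + 1) = fun x => ∑ j ∈ Finset.Icc (-(N:ℤ)) N,
      σ j * fourierCoef (fun x => y n x +
        (T / N) * ∑ k ∈ Finset.range (q + 1), a k * (y n x) ^ k +
              ∑ i ∈ Finset.Icc (-(N : ℤ)) (N : ℤ), b (n + 1) i * trigBasisFun i x) j * trigBasisFun j x)
    (hδ : 0 < δ)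
    (hδ1 : 4 * N * (δ * (N * G) ^ N) ≤ 1 / 2)
    (hδ2 : 4 * N * (δ * (N * G) ^ N) ≤ |a q| / (16 * L))
    (hM1 : 1 ≤ M) (hM2 : 4 ≤ κ * M) (hM3 : 8 * A ≤ |a q| * M)
    (hb10 : |b 1 0 - (M + 1 - (c0 0 + (T / N) *
      fourierCoef (fun x => ∑ k ∈ Finset.range (q + 1), a k * (y 0 x) ^ k) 0))| ≤ δ)
    (hb1 : ∀ j ∈ Finset.Icc (-(N:ℤ)) N, j ≠ 0 → |b 1 j - (0 - (c0 j + (T / N) *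
      fourierCoef (fun x => ∑ k ∈ Finset.range (q + 1), a k * (y 0 x) ^ k) j))| ≤ δ)
    (hb : ∀ n, 2 ≤ n → n ≤ N → ∀ j ∈ Finset.Icc (-(N:ℤ)) N, |b n j| ≤ δ) :
    ((2:ℝ) ^ (2 ^ N)) ^ 2 ≤ ∫ x in Set.Ioo (0 : ℝ) 1, (y N x) ^ 2 := by
  obtain ⟨c, hc, hcM, hcg, hcb⟩ := chain_lemma N q hN hq a T hT haq c0 σ b y L A κ G δ M hL hA hκ hG
    hG1 hσ0 hσ hy0 hyrec hδ hδ1 hδ2 hM1 hM2 hM3 hb10 hb1 hb N hN le_rfl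
  have hyc : Continuous (y N) := by rw [hc]; exact tsum_cont _ _
  have hpt : ∀ x, ((2:ℝ) ^ (2 ^ N)) ^ 2 ≤ (y N x) ^ 2 := by
    intro x
    have hd := dev_bound N c _ hcb x
    have hyx : y N x = ∑ j ∈ Finset.Icc (-(N:ℤ)) N, c j * trigBasisFun j x := by rw [hc]
    rw [← hyx] at hd
    have h1 : |y N x - c 0| ≤ 1 / 2 * |c 0| := by
      refine hd.trans ?_
      rw [← mul_assoc]
      exact mul_le_mul_of_nonneg_right hδ1 (abs_nonneg _)
    have h2 := abs_sub_abs_le_abs_sub (c 0) (y N x)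
    rw [abs_sub_comm] at h2
    have h3 : (2:ℝ) ^ (2 ^ N) ≤ |y N x| := by
      have : κ * |c 0| ≤ 1 / 2 * |c 0| := mul_le_mul_of_nonneg_right hκ2 (abs_nonneg _)
      linarith
    rw [← sq_abs (y N x)]
    gcongr
  have hint : IntegrableOn (fun x => (y N x) ^ 2) (Set.Ioo (0:ℝ) 1) :=
    ((hyc.pow 2).integrableOn_Icc (a := 0) (b := 1)).mono_set Set.Ioo_subset_Icc_self
  have hci : IntegrableOn (fun _ : ℝ => ((2:ℝ) ^ (2 ^ N)) ^ 2) (Set.Ioo (0:ℝ) 1) :=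
    (continuous_const.integrableOn_Icc (a := 0) (b := 1)).mono_set Set.Ioo_subset_Icc_self
  have := integral_mono hci hint hpt
  simpa using this

lemma gauss_low (v : ℝ) (hv : 0 < v) (b B δ : ℝ) (hb : |b| ≤ B) (hδ : 0 < δ) (hδ1 : δ ≤ 1) :
    ENNReal.ofReal (2 * δ * ((√(2 * π * v))⁻¹ * Real.exp (-((B + 1) ^ 2 / (2 * v)))))
      ≤ gaussianReal 0 v.toNNReal (Set.Icc (b - δ) (b + δ)) := by
  have hv' : v.toNNReal ≠ 0 := by simpa using hv
  rw [gaussianReal_apply _ hv']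
  have hlow : ∀ x ∈ Set.Icc (b - δ) (b + δ),
      ENNReal.ofReal ((√(2 * π * v))⁻¹ * Real.exp (-((B + 1) ^ 2 / (2 * v))))
        ≤ gaussianPDF 0 v.toNNReal x := by
    intro x hx
    unfold gaussianPDF gaussianPDFReal
    rw [Real.coe_toNNReal v hv.le]
    apply ENNReal.ofReal_le_ofReal
    have : (x - 0) ^ 2 ≤ (B + 1) ^ 2 := by
      rw [sub_zero]
      rw [abs_le] at hb
      exact sq_le_sq' (by linarith [hx.1]) (by linarith [hx.2])
    rw [neg_div]
    gcongr
  calc _ = ∫⁻ x in Set.Icc (b - δ) (b + δ),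
        ENNReal.ofReal ((√(2 * π * v))⁻¹ * Real.exp (-((B + 1) ^ 2 / (2 * v)))) := by
        rw [setLIntegral_const, Real.volume_Icc, ← ENNReal.ofReal_mul (by positivity)]
        congr 1; ring
    _ ≤ _ := setLIntegral_mono' measurableSet_Icc hlow

lemma indep_low {Ω ι : Type*} [Fintype ι] [MeasurableSpace Ω] (P : Measure Ω)
    (X : ι → Ω → ℝ) (hX : ∀ i, Measurable (X i)) (hind : iIndepFun X P) (v : ℝ) (hv : 0 < v)
    (hlaw : ∀ i, P.map (X i) = gaussianReal 0 v.toNNReal)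
    (b : ι → ℝ) (B δ : ℝ) (hb : ∀ i, |b i| ≤ B) (hδ : 0 < δ) (hδ1 : δ ≤ 1) :
    ENNReal.ofReal (2 * δ * ((√(2 * π * v))⁻¹ * Real.exp (-((B + 1) ^ 2 / (2 * v))))) ^ Fintype.card ι
      ≤ P (⋂ i, X i ⁻¹' Set.Icc (b i - δ) (b i + δ)) := by
  have h := hind.measure_inter_preimage_eq_mul Finset.univ
    (sets := fun i => Set.Icc (b i - δ) (b i + δ)) (fun i _ => measurableSet_Icc)
  simp only [Finset.mem_univ, Set.iInter_true] at h
  rw [h, ← Finset.card_univ, ← Finset.prod_const]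
  refine Finset.prod_le_prod' fun i _ => ?_
  rw [← Measure.map_apply (hX i) measurableSet_Icc, hlaw]
  exact gauss_low v hv _ _ _ (hb i) hδ hδ1

lemma rho_low (T G ε C1 : ℝ) (q : ℕ) (hT : 0 < T) (hG : 1 ≤ G) (hε : 0 < ε) (hC1 : 0 ≤ C1) :
    ∃ C : ℝ, 0 ≤ C ∧ ∀ N : ℕ, 1 ≤ N → ∀ B : ℝ, 0 ≤ B → B + 1 ≤ C1 * (N:ℝ) ^ q →
      Real.exp (-(C * (N:ℝ) ^ (2 * q + 2))) ≤
      2 * (ε / (4 * N * (N * G) ^ N)) * ((√(2 * π * (T / N)))⁻¹ * Real.exp (-((B + 1) ^ 2 / (2 * (T / N))))) := by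
  have hs0 : 0 < √(2 * π * T) := by positivity
  set u := |Real.log (ε / 2)| with hu
  set w := |Real.log (√(2 * π * T))| with hw
  refine ⟨u + 1 + (1 + G) + w + C1 ^ 2 / (2 * T), by positivity, fun N hN B hB0 hB => ?_⟩
  have hN' : (1:ℝ) ≤ N := by exact_mod_cast hN
  have hN0 : (0:ℝ) < N := by linarith
  have f1 : Real.exp (-u) ≤ ε / 2 := by
    rw [← Real.le_log_iff_exp_le (by positivity)]
    exact neg_abs_le _
  have f2 : Real.exp (-(N:ℝ)) ≤ (N:ℝ)⁻¹ := by
    rw [Real.exp_neg]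
    have := Real.add_one_le_exp (N:ℝ)
    gcongr; linarith
  have f3 : Real.exp (-((1 + G) * N * N)) ≤ ((N * G) ^ N)⁻¹ := by
    rw [Real.exp_neg]
    have h1 : N * G ≤ Real.exp ((1 + G) * N) := by
      have e1 := Real.add_one_le_exp (N:ℝ)
      have e2 := Real.add_one_le_exp G
      calc N * G ≤ Real.exp N * Real.exp G := by gcongr <;> linarith
        _ = Real.exp (N + G) := (Real.exp_add _ _).symm
        _ ≤ _ := Real.exp_le_exp.2 (by nlinarith)
    have h2 : (N * G) ^ N ≤ Real.exp ((1 + G) * N * N) := by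
      calc (N * G) ^ N ≤ (Real.exp ((1 + G) * N)) ^ N := by gcongr
        _ = _ := by rw [← Real.exp_nat_mul]; congr 1; ring
    gcongr
  have f4 : Real.exp (-w) ≤ (√(2 * π * (T / N)))⁻¹ := by
    have h1 : √(2 * π * (T / N)) ≤ √(2 * π * T) := by
      apply Real.sqrt_le_sqrt
      have : T / N ≤ T := div_le_self hT.le hN'
      gcongr
    have h2 : √(2 * π * T) ≤ Real.exp w := by
      rw [← Real.log_le_iff_le_exp hs0]
      exact le_abs_self _
    rw [Real.exp_neg]
    have : 0 < √(2 * π * (T / N)) := by positivity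
    gcongr
    exact h1.trans h2
  have f5 : Real.exp (-(C1 ^ 2 / (2 * T) * (N:ℝ) ^ (2 * q + 1))) ≤ Real.exp (-((B + 1) ^ 2 / (2 * (T / N)))) := by
    apply Real.exp_le_exp.2
    apply neg_le_neg
    have : (B + 1) ^ 2 ≤ (C1 * (N:ℝ) ^ q) ^ 2 := by gcongr
    calc (B + 1) ^ 2 / (2 * (T / N)) ≤ (C1 * (N:ℝ) ^ q) ^ 2 / (2 * (T / N)) := by gcongr
      _ = _ := by field_simp; ring
  calc Real.exp (-((u + 1 + (1 + G) + w + C1 ^ 2 / (2 * T)) * (N:ℝ) ^ (2 * q + 2)))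
      ≤ Real.exp (-u + -(N:ℝ) + -((1 + G) * N * N) + (-w + -(C1 ^ 2 / (2 * T) * (N:ℝ) ^ (2 * q + 1)))) := by
        apply Real.exp_le_exp.2
        have p1 : 1 ≤ (N:ℝ) ^ (2 * q + 2) := one_le_pow₀ hN'
        have p2 : (N:ℝ) ≤ (N:ℝ) ^ (2 * q + 2) := le_self_pow₀ hN' (by omega)
        have p3 : (N:ℝ) * N ≤ (N:ℝ) ^ (2 * q + 2) := by
          rw [← sq]; exact pow_le_pow_right₀ hN' (by omega)
        have p4 : (N:ℝ) ^ (2 * q + 1) ≤ (N:ℝ) ^ (2 * q + 2) := pow_le_pow_right₀ hN' (by omega)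
        have r1 := mul_le_mul_of_nonneg_left p1 (abs_nonneg (Real.log (ε / 2)))
        have r2 := mul_le_mul_of_nonneg_left p1 (abs_nonneg (Real.log (√(2 * π * T))))
        have r3 := mul_le_mul_of_nonneg_left p3 (show 0 ≤ 1 + G by linarith)
        have r4 := mul_le_mul_of_nonneg_left p4 (show 0 ≤ C1 ^ 2 / (2 * T) by positivity)
        rw [← hu] at r1
        rw [← hw] at r2
        linarith
    _ = (Real.exp (-u) * Real.exp (-(N:ℝ)) * Real.exp (-((1 + G) * N * N))) * (Real.exp (-w) *
          Real.exp (-(C1 ^ 2 / (2 * T) * (N:ℝ) ^ (2 * q + 1)))) := by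
        simp only [Real.exp_add]
    _ ≤ (ε / 2 * (N:ℝ)⁻¹ * ((N * G) ^ N)⁻¹) * ((√(2 * π * (T / N)))⁻¹ * Real.exp (-((B + 1) ^ 2 / (2 * (T / N))))) := by
        gcongr
    _ = _ := by
        congr 1
        field_simp
        norm_num

lemma asym (C l : ℝ) (k : ℕ) (hl : 0 < l) :
    Filter.Tendsto (fun N : ℕ => Real.exp (l * 2 ^ N - C * (N:ℝ) ^ k)) Filter.atTop Filter.atTop := by
  apply Real.tendsto_exp_atTop.comp
  have h1 : Filter.Tendsto (fun N : ℕ => (N:ℝ) ^ k / 2 ^ N) Filter.atTop (nhds 0) :=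
    tendsto_pow_const_div_const_pow_of_one_lt k (by norm_num)
  have h2 : Filter.Tendsto (fun N : ℕ => l - C * ((N:ℝ) ^ k / 2 ^ N)) Filter.atTop (nhds l) := by
    simpa using tendsto_const_nhds.sub (h1.const_mul C)
  have h3 : Filter.Tendsto (fun N : ℕ => (2:ℝ) ^ N) Filter.atTop Filter.atTop :=
    tendsto_pow_atTop_atTop_of_one_lt (by norm_num)
  refine (h3.atTop_mul_pos hl h2).congr fun N => ?_
  field_simp

lemma fc_int_bound {v : ℝ → ℝ} (hv : IntegrableOn v (Set.Ioo (0:ℝ) 1)) (j : ℤ) :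
    |fourierCoef v j| ≤ ∫ x in Set.Ioo (0:ℝ) 1, 2 * |v x| := by
  unfold fourierCoef
  have hg : Integrable (fun x => 2 * |v x|) (volume.restrict (Set.Ioo (0:ℝ) 1)) := hv.abs.const_mul 2
  rw [← Real.norm_eq_abs]
  refine norm_integral_le_of_norm_le hg (Filter.Eventually.of_forall fun x => ?_)
  rw [Real.norm_eq_abs, abs_mul]
  exact mul_le_mul_of_nonneg_right (trig_abs_le j x) (abs_nonneg _)

lemma init_bound (N q : ℕ) (hN : 1 ≤ N) (a : ℕ → ℝ) (T : ℝ) (hT : 0 < T) (c0 : ℤ → ℝ) (C : ℝ)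
    (hC : ∀ j, |c0 j| ≤ C) (hq : 1 ≤ q) (y : ℝ → ℝ)
    (hy : y = fun x => ∑ j ∈ Finset.Icc (-(N:ℤ)) N, c0 j * trigBasisFun j x) (j : ℤ) :
    |c0 j + (T / N) * fourierCoef (fun x => ∑ k ∈ Finset.range (q + 1), a k * (y x) ^ k) j|
      ≤ (C + T * (2 * ((∑ k ∈ Finset.range (q + 1), |a k|) * (6 * C + 1) ^ q))) * (N:ℝ) ^ q := by
  have hN' : (1:ℝ) ≤ N := by exact_mod_cast hN
  have hC0 : 0 ≤ C := (abs_nonneg _).trans (hC 0)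
  have hy' : ∀ x, |y x| ≤ (6 * C + 1) * N := by
    intro x
    rw [hy]
    refine (Finset.abs_sum_le_sum_abs _ _).trans ?_
    have : ∀ j ∈ (Finset.Icc (-(N:ℤ)) N), |c0 j * trigBasisFun j x| ≤ C * 2 := by
      intro j hj
      rw [abs_mul]
      exact mul_le_mul (hC j) (trig_abs_le j x) (abs_nonneg _) hC0
    refine (Finset.sum_le_card_nsmul _ _ _ this).trans ?_
    rw [Int.card_Icc]
    have : ((N:ℤ) + 1 - -(N:ℤ)).toNat = 2 * N + 1 := by omega
    rw [this, nsmul_eq_mul]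
    push_cast
    nlinarith
  have hR1 : 1 ≤ (6 * C + 1) * N := one_le_mul_of_one_le_of_one_le (by linarith) hN'
  have hF : ∀ x, |∑ k ∈ Finset.range (q + 1), a k * (y x) ^ k| ≤
      (∑ k ∈ Finset.range (q + 1), |a k|) * ((6 * C + 1) * N) ^ q := by
    intro x
    refine (Finset.abs_sum_le_sum_abs _ _).trans ?_
    rw [Finset.sum_mul]
    refine Finset.sum_le_sum fun k hk => ?_
    rw [abs_mul, abs_pow]
    have hkq : k ≤ q := by simpa [Nat.lt_succ_iff] using hk
    refine mul_le_mul_of_nonneg_left ?_ (abs_nonneg _)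
    calc |y x| ^ k ≤ ((6 * C + 1) * N) ^ k := by gcongr; exact hy' x
      _ ≤ _ := pow_le_pow_right₀ hR1 hkq
  have hfc := fc_bound hF j
  have hS : 0 ≤ ∑ k ∈ Finset.range (q + 1), |a k| := Finset.sum_nonneg fun k _ => abs_nonneg _
  set S := ∑ k ∈ Finset.range (q + 1), |a k|
  have hTN : T / N ≤ T := div_le_self hT.le hN'
  have hp1 : 1 ≤ (N:ℝ) ^ q := one_le_pow₀ hN'
  refine (abs_add_le _ _).trans ?_
  rw [abs_mul, abs_of_pos (show 0 < T / (N:ℝ) by positivity), add_mul]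
  refine add_le_add ((hC j).trans (le_mul_of_one_le_right hC0 hp1)) ?_
  calc T / N * |fourierCoef (fun x => ∑ k ∈ Finset.range (q + 1), a k * (y x) ^ k) j|
      ≤ T * (2 * (S * ((6 * C + 1) * N) ^ q)) := by gcongr
    _ = _ := by rw [mul_pow]; ring

/-- Strong and numerically weak divergence of full-discrete exponential Euler and linear-implicit
Euler spectral Galerkin approximations of reaction–diffusion SPDEs
`∂ₜX = ΔX + Σ_{k=0}^{q} a_k X^k + Ẇ` with space-time white noise and periodic boundary
conditions on `(0,1)`: for every `p ∈ (0,∞)` it holds that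
`liminf_{N→∞} E[‖Y^N_N‖²_{L²}^{p/2}] = ∞`. -/
theorem spde_euler_divergence
    {Ω : Type*} [MeasurableSpace Ω] (P : Measure Ω) [IsProbabilityMeasure P]
    (T : ℝ) (hT : 0 < T)
    (q : ℕ) (hq : 2 ≤ q) (a : ℕ → ℝ) (haq : a q ≠ 0)
    (χ : ℝ) (hχ : 1 / 4 < χ)
    (ξ : ℝ → ℝ) (hξ2 : MemLp ξ 2 (volume.restrict (Set.Ioo (0 : ℝ) 1)))
    (hξreg : Summable (fun n : ℤ =>
        (1 + 4 * π ^ 2 * (n : ℝ) ^ 2) ^ (2 * χ) * fourierCoef ξ n ^ 2))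
    (s : ℕ → ℤ → ℝ)
    (hs : ∀ N : ℕ, 1 ≤ N →
        (∀ j : ℤ, s N j = Real.exp (-(4 * π ^ 2 * (j : ℝ) ^ 2 * T / N))) ∨
        (∀ j : ℤ, s N j = (1 + 4 * π ^ 2 * (j : ℝ) ^ 2 * T / N)⁻¹))
    (β : ℕ → ℤ → ℕ → Ω → ℝ)
    (hβmeas : ∀ N j n, Measurable (β N j n))
    (hβindep : ∀ N : ℕ, 1 ≤ N →
        iIndepFun
          (fun jn : (Finset.Icc (-(N : ℤ)) (N : ℤ)) × (Finset.Icc 1 N) =>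
            β N (jn.1 : ℤ) (jn.2 : ℕ)) P)
    (hβlaw : ∀ N : ℕ, 1 ≤ N → ∀ j ∈ Finset.Icc (-(N : ℤ)) (N : ℤ), ∀ n ∈ Finset.Icc 1 N,
        P.map (β N j n) = gaussianReal 0 (Real.toNNReal (T / N)))
    (Y : ℕ → ℕ → Ω → ℝ → ℝ)
    (hY0 : ∀ N : ℕ, 1 ≤ N → ∀ ω, Y N 0 ω =
        fun x => ∑ j ∈ Finset.Icc (-(N : ℤ)) (N : ℤ), fourierCoef ξ j * trigBasisFun j x)
    (hYrec : ∀ N : ℕ, 1 ≤ N → ∀ n < N, ∀ ω, Y N (n + 1) ω = fun x =>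
        ∑ j ∈ Finset.Icc (-(N : ℤ)) (N : ℤ),
          s N j *
            fourierCoef (fun y => Y N n ω y +
              (T / N) * ∑ k ∈ Finset.range (q + 1), a k * (Y N n ω y) ^ k +
              ∑ i ∈ Finset.Icc (-(N : ℤ)) (N : ℤ), β N i (n + 1) ω * trigBasisFun i y) j *
            trigBasisFun j x)
    (p : ℝ) (hp : 0 < p) :
    Filter.liminf (fun N : ℕ =>
        ∫⁻ ω, ENNReal.ofReal ((∫ x in Set.Ioo (0 : ℝ) 1, (Y N N ω x) ^ 2) ^ (p / 2)) ∂P)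
      Filter.atTop = ⊤ := by
  classical
  have haq' : 0 < |a q| := abs_pos.2 haq
  obtain ⟨L, hL⟩ : ∃ L : ℝ, L = ∑ k ∈ Finset.range (q + 1), |a k| * ((k:ℝ) * 2 ^ k) + 1 := ⟨_, rfl⟩
  obtain ⟨A, hA⟩ : ∃ A : ℝ, A = ∑ k ∈ Finset.range q, |a k| := ⟨_, rfl⟩
  have hA0 : 0 ≤ A := by rw [hA]; exact Finset.sum_nonneg fun k _ => abs_nonneg _
  have hLpos : 0 < L := by
    have : 0 ≤ ∑ k ∈ Finset.range (q + 1), |a k| * ((k:ℝ) * 2 ^ k) :=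
      Finset.sum_nonneg fun k _ => by positivity
    linarith
  obtain ⟨G, hG, hG1⟩ : ∃ G : ℝ, 2 * (2 + 8 * T * L) / (T * |a q|) ≤ G ∧ 1 ≤ G :=
    ⟨_, le_max_left _ _, le_max_right _ _⟩
  obtain ⟨ε, hε0, hε1, hε2⟩ : ∃ ε : ℝ, 0 < ε ∧ ε ≤ 1 / 2 ∧ ε ≤ |a q| / (16 * L) :=
    ⟨min (1/2) (|a q| / (16 * L)), lt_min (by norm_num) (by positivity), min_le_left _ _,
      min_le_right _ _⟩
  have hξi : IntegrableOn ξ (Set.Ioo (0:ℝ) 1) := hξ2.integrable (by norm_num)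
  obtain ⟨Cξ, hCξ⟩ : ∃ C : ℝ, ∀ j, |fourierCoef ξ j| ≤ C := ⟨_, fc_int_bound hξi⟩
  have hCξ0 : 0 ≤ Cξ := (abs_nonneg _).trans (hCξ 0)
  obtain ⟨Cd, hCd⟩ : ∃ C : ℝ, C = (Cξ + T * (2 * ((∑ k ∈ Finset.range (q + 1), |a k|) * (6 * Cξ + 1) ^ q))) :=
    ⟨_, rfl⟩
  have hCd0 : 0 ≤ Cd := by
    have : 0 ≤ ∑ k ∈ Finset.range (q + 1), |a k| := Finset.sum_nonneg fun k _ => abs_nonneg _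
    rw [hCd]; positivity
  obtain ⟨K, hK1, hK2, hK3⟩ : ∃ K : ℝ, 1 ≤ K ∧ 8 / (T * |a q|) ≤ K ∧ 8 * A / |a q| ≤ K := by
    refine ⟨1 + 8 / (T * |a q|) + 8 * A / |a q|, ?_, ?_, ?_⟩
    all_goals
      have h1 : 0 ≤ 8 / (T * |a q|) := by positivity
      have h2 : 0 ≤ 8 * A / |a q| := by positivity
      linarith
  obtain ⟨C, hC0, hC⟩ := rho_low T G ε (K + 2 + Cd) q hT hG1 hε0 (by linarith)
  have hlim := ENNReal.tendsto_ofReal_atTop.comp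
    (asym (3 * C) (p * Real.log 2) (2 * q + 4) (mul_pos hp (Real.log_pos (by norm_num))))
  refine (tendsto_nhds_top_mono hlim ?_).liminf_eq
  have hev : ∀ᶠ N : ℕ in Filter.atTop, T * |a q| ≤ N :=
    (tendsto_natCast_atTop_atTop (R := ℝ)).eventually_ge_atTop _
  filter_upwards [hev, Filter.eventually_ge_atTop 1] with N hNκ hN
  have hN' : (1:ℝ) ≤ N := by exact_mod_cast hN
  have hN0 : (0:ℝ) < N := by linarith
  have hNG : 1 ≤ N * G := one_le_mul_of_one_le_of_one_le hN' hG1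
  obtain ⟨κ, hκ⟩ : ∃ κ : ℝ, κ = T * |a q| / (2 * N) := ⟨_, rfl⟩
  have hκ2 : κ ≤ 1 / 2 := by
    rw [hκ, div_le_div_iff₀ (by positivity) (by norm_num)]; linarith
  obtain ⟨δ, hδ⟩ : ∃ δ : ℝ, δ = ε / (4 * N * (N * G) ^ N) := ⟨_, rfl⟩
  have hδ0 : 0 < δ := by rw [hδ]; positivity
  have hδε : 4 * N * (δ * (N * G) ^ N) = ε := by rw [hδ]; field_simp
  have hδ1 : δ ≤ 1 := by
    have h1 : δ ≤ δ * (N * G) ^ N := le_mul_of_one_le_right hδ0.le (one_le_pow₀ hNG)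
    nlinarith
  obtain ⟨M, hM⟩ : ∃ M : ℝ, M = K * N := ⟨_, rfl⟩
  have hM1 : 1 ≤ M := by rw [hM]; exact one_le_mul_of_one_le_of_one_le hK1 hN'
  have hM2 : 4 ≤ κ * M := by
    rw [div_le_iff₀ (by positivity)] at hK2
    have : κ * M = K * (T * |a q|) / 2 := by rw [hκ, hM]; field_simp
    rw [this]; linarith
  have hM3 : 8 * A ≤ |a q| * M := by
    rw [div_le_iff₀ haq'] at hK3
    rw [hM]; nlinarith
  -- the deterministic drift of the first step
  obtain ⟨d, hd⟩ : ∃ d : ℤ → ℝ, ∀ j, d j = fourierCoef ξ j + (T / N) *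
      fourierCoef (fun x => ∑ k ∈ Finset.range (q + 1), a k *
        (∑ j ∈ Finset.Icc (-(N : ℤ)) (N : ℤ), fourierCoef ξ j * trigBasisFun j x) ^ k) j :=
    ⟨_, fun _ => rfl⟩
  have hdb : ∀ j, |d j| ≤ Cd * (N:ℝ) ^ q := by
    intro j
    rw [hd, hCd]
    exact init_bound N q hN a T hT (fourierCoef ξ) Cξ hCξ (by omega) _ rfl j
  obtain ⟨b, hb⟩ : ∃ b : ℤ → ℕ → ℝ, ∀ j n, b j n =
    if n = 1 then (if j = 0 then M + 1 else 0) - d j else 0 := ⟨_, fun _ _ => rfl⟩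
  have hNq : 0 ≤ Cd * (N:ℝ) ^ q := by positivity
  have hbb : ∀ j n, |b j n| ≤ M + 1 + Cd * (N:ℝ) ^ q := by
    intro j n
    rw [hb]
    have := abs_le.1 (hdb j)
    split_ifs <;> rw [abs_le] <;> constructor <;> linarith
  have hρ := hC N hN (M + 1 + Cd * (N:ℝ) ^ q) (by linarith) (by
    have h1 : (1:ℝ) ≤ (N:ℝ) ^ q := one_le_pow₀ hN'
    have h2 : (N:ℝ) ≤ (N:ℝ) ^ q := le_self_pow₀ hN' (by omega)
    have h3 : K * N ≤ K * (N:ℝ) ^ q := mul_le_mul_of_nonneg_left h2 (by linarith)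
    rw [hM]; linarith)
  rw [← hδ] at hρ
  have hprob := indep_low P
    (fun jn : (Finset.Icc (-(N : ℤ)) (N : ℤ)) × (Finset.Icc 1 N) => β N (jn.1 : ℤ) (jn.2 : ℕ))
    (fun i => hβmeas _ _ _) (hβindep N hN) (T / N) (by positivity)
    (fun i => hβlaw N hN _ i.1.2 _ i.2.2) (fun i => b i.1 i.2) (M + 1 + Cd * (N:ℝ) ^ q) δ
    (fun i => hbb _ _) hδ0 hδ1
  set E : Set Ω := ⋂ i : (Finset.Icc (-(N : ℤ)) (N : ℤ)) × (Finset.Icc 1 N),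
    (β N (i.1 : ℤ) (i.2 : ℕ)) ⁻¹' Set.Icc (b i.1 i.2 - δ) (b i.1 i.2 + δ) with hE
  have hEm : MeasurableSet E :=
    MeasurableSet.iInter fun i => hβmeas _ _ _ measurableSet_Icc
  have hcard : Fintype.card ((Finset.Icc (-(N : ℤ)) (N : ℤ)) × (Finset.Icc 1 N)) = (2 * N + 1) * N := by
    rw [Fintype.card_prod, Fintype.card_coe, Fintype.card_coe, Int.card_Icc, Nat.card_Icc]
    have : ((N:ℤ) + 1 - -(N:ℤ)).toNat = 2 * N + 1 := by omega
    rw [this]; simp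
  rw [hcard] at hprob
  have hPE : ENNReal.ofReal (Real.exp (-(3 * C * (N:ℝ) ^ (2 * q + 4)))) ≤ P E := by
    refine le_trans ?_ hprob
    rw [← ENNReal.ofReal_pow ((Real.exp_pos _).le.trans hρ)]
    apply ENNReal.ofReal_le_ofReal
    refine le_trans ?_ (pow_le_pow_left₀ (Real.exp_pos _).le hρ _)
    rw [← Real.exp_nat_mul]
    apply Real.exp_le_exp.2
    have h1 : (((2 * N + 1) * N : ℕ) : ℝ) ≤ 3 * (N:ℝ) ^ 2 := by push_cast; nlinarith
    have h2 : 0 ≤ C * (N:ℝ) ^ (2 * q + 2) := by positivity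
    have h3 := mul_le_mul_of_nonneg_right h1 h2
    have h4 : 3 * (N:ℝ) ^ 2 * (C * (N:ℝ) ^ (2 * q + 2)) = 3 * C * (N:ℝ) ^ (2 * q + 4) := by ring
    linarith
  have hσ : s N 0 = 1 ∧ ∀ j, |s N j| ≤ 1 := by
    rcases hs N hN with h | h
    · refine ⟨by rw [h]; simp, fun j => ?_⟩
      rw [h, abs_of_pos (Real.exp_pos _), Real.exp_le_one_iff]
      have : 0 ≤ 4 * π ^ 2 * (j : ℝ) ^ 2 * T / N := by positivity
      linarith
    · refine ⟨by rw [h]; simp, fun j => ?_⟩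
      have : 0 ≤ 4 * π ^ 2 * (j : ℝ) ^ 2 * T / N := by positivity
      rw [h, abs_of_pos (by positivity)]
      exact inv_le_one_of_one_le₀ (by linarith)
  have hlow : ∀ ω ∈ E, Real.exp (p * Real.log 2 * 2 ^ N) ≤
      (∫ x in Set.Ioo (0 : ℝ) 1, (Y N N ω x) ^ 2) ^ (p / 2) := by
    intro ω hω
    have hω' : ∀ j ∈ Finset.Icc (-(N:ℤ)) N, ∀ n ∈ Finset.Icc 1 N, |β N j n ω - b j n| ≤ δ := by
      intro j hj n hn
      have := Set.mem_iInter.1 hω (⟨j, hj⟩, ⟨n, hn⟩)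
      simp only [Set.mem_preimage, Set.mem_Icc] at this
      rw [abs_le]; constructor <;> linarith [this.1, this.2]
    have mem0 : (0:ℤ) ∈ Finset.Icc (-(N:ℤ)) N := by simp
    have mem1 : 1 ∈ Finset.Icc 1 N := by simpa using hN
    have hfin := final_lower N q hN hq a T hT haq (fourierCoef ξ) (s N) (fun n j => β N j n ω)
      (fun n => Y N n ω) L A κ G δ M hL hA hκ hκ2 hG hG1 hσ.1 hσ.2 (hY0 N hN ω)
      (fun n hn => hYrec N hN n hn ω) hδ0 (hδε.le.trans hε1) (hδε.le.trans hε2) hM1 hM2 hM3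
      (by
        have := hω' 0 mem0 1 mem1
        rw [hb, hd] at this
        simp only [if_true] at this
        simp only [hY0 N hN ω]
        exact this)
      (fun j hj hj0 => by
        have := hω' j hj 1 mem1
        rw [hb, hd] at this
        simp only [if_true, hj0, if_false] at this
        simp only [hY0 N hN ω]
        exact this)
      (fun n hn2 hnN j hj => by
        have := hω' j hj n (Finset.mem_Icc.2 ⟨by omega, hnN⟩)
        rw [hb, if_neg (by omega), sub_zero] at this
        exact this)
    refine le_trans (le_of_eq ?_) (Real.rpow_le_rpow (by positivity) hfin (by positivity))
    rw [← pow_mul, ← Real.rpow_natCast (2:ℝ) (2 ^ N * 2), ← Real.rpow_mul (by norm_num),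
      Real.rpow_def_of_pos (by norm_num)]
    congr 1
    push_cast
    ring
  calc ENNReal.ofReal (Real.exp (p * Real.log 2 * 2 ^ N - 3 * C * (N:ℝ) ^ (2 * q + 4)))
      = ENNReal.ofReal (Real.exp (p * Real.log 2 * 2 ^ N)) *
          ENNReal.ofReal (Real.exp (-(3 * C * (N:ℝ) ^ (2 * q + 4)))) := by
        rw [← ENNReal.ofReal_mul (Real.exp_pos _).le, ← Real.exp_add, sub_eq_add_neg]
    _ ≤ ENNReal.ofReal (Real.exp (p * Real.log 2 * 2 ^ N)) * P E := by gcongr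
    _ = ∫⁻ _ω in E, ENNReal.ofReal (Real.exp (p * Real.log 2 * 2 ^ N)) ∂P := by
        rw [setLIntegral_const]
    _ ≤ ∫⁻ ω in E, ENNReal.ofReal ((∫ x in Set.Ioo (0 : ℝ) 1, (Y N N ω x) ^ 2) ^ (p / 2)) ∂P :=
        setLIntegral_mono' hEm fun ω hω => ENNReal.ofReal_le_ofReal (hlow ω hω)
    _ ≤ _ := setLIntegral_le_lintegral _ _
end
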